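/- arXiv:1710.00070 — 2 statements merged into one kernel-verified Lean document; each statement's English description precedes it below -/
import Mathlib

section
/- Let n ∈ ω and let R be a Σ^0_{n+2} open subset of (ω)^2 (given by a computable Borel code for a Σ^0_{n+2} set) with complement also of this form, such that (ω)^2 = R ∪ ¬R. Then there is either an infinite partition x ∈ (ω)^ω computable from ∅^{(n)} with (x)^2 ⊆ ¬R, or an infinite partition x computable from ∅^{(n+1)} with (x)^2 ⊆ R. -/
open Set

/-- `f : ℕ → ℕ` is ordered: a value `i` can occur only after all `j < i` have occurred. -/
def IsOrderedFn (f : ℕ → ℕ) : Prop :=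
  ∀ n i, f n = i → ∀ j < i, ∃ m < n, f m = j

/-- `(ω)^k`: ordered surjections from `ω` onto `k`. -/
def OmegaPart (k : ℕ) : Set (ℕ → ℕ) :=
  {f | IsOrderedFn f ∧ (∀ n, f n < k) ∧ ∀ i < k, ∃ n, f n = i}

/-- `(ω)^ω`: ordered surjections from `ω` onto `ω` (infinite partitions). -/
def OmegaPartInf : Set (ℕ → ℕ) :=
  {f | IsOrderedFn f ∧ Function.Surjective f}

/-- `(p)^k`: the `k`-coarsenings of `p`. -/
def Coarsenings (p : ℕ → ℕ) (k : ℕ) : Set (ℕ → ℕ) :=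
  {q | q ∈ OmegaPart k ∧ ∀ n m, p n = p m → q n = q m}

/-- `(p)^ω`: the infinite coarsenings of `p`. -/
def CoarseningsInf (p : ℕ → ℕ) : Set (ℕ → ℕ) :=
  {q | q ∈ OmegaPartInf ∧ ∀ n m, p n = p m → q n = q m}

/-- `μ^x(i)`: the least `n` with `x n = i`. -/
noncomputable def mu (x : ℕ → ℕ) (i : ℕ) : ℕ := sInf {n | x n = i}

/-- `x ↾ n` as a finite string. -/
def restrictList (x : ℕ → ℕ) (n : ℕ) : List ℕ := (List.range n).map x

/-- The basic (cylinder) set `[σ]` of functions extending the finite string `σ`. -/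
def Cyl (σ : List ℕ) : Set (ℕ → ℕ) := {x | ∀ n < σ.length, x n = σ.getD n 0}

/-- A finite string is ordered. -/
def ListOrdered (σ : List ℕ) : Prop :=
  ∀ n < σ.length, ∀ j < σ.getD n 0, ∃ m < n, σ.getD m 0 = j

/-- `(ω)^k_fin`: ordered finite strings over `k` in which all `i < k` appear. -/
def OmegaPartFin (k : ℕ) : Set (List ℕ) :=
  {σ | ListOrdered σ ∧ (∀ a ∈ σ, a < k) ∧ ∀ i < k, i ∈ σ}

/-- Composition `σ ∘ τ` of finite strings: `(σ ∘ τ)(n) = σ(τ(n))`. -/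
def listComp (σ τ : List ℕ) : List ℕ := τ.map fun n => σ.getD n 0

/-- `σ'` is a `k`-coarsening of the finite string `τ`. -/
def IsListCoarsening (k : ℕ) (σ' τ : List ℕ) : Prop :=
  σ' ∈ OmegaPartFin k ∧ σ'.length = τ.length ∧
    ∀ n < τ.length, ∀ m < τ.length,
      τ.getD n 0 = τ.getD m 0 → σ'.getD n 0 = σ'.getD m 0

/-- The open set coded by a set `W` of finite strings. -/
def OpenFrom (W : Set (List ℕ)) : Set (ℕ → ℕ) := {x | ∃ σ ∈ W, x ∈ Cyl σ}

/-- Codes for partial recursive functionals with an oracle. -/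
inductive OracleCode : Type
  | oracle : OracleCode
  | zero : OracleCode
  | succ : OracleCode
  | left : OracleCode
  | right : OracleCode
  | pair : OracleCode → OracleCode → OracleCode
  | comp : OracleCode → OracleCode → OracleCode
  | prec : OracleCode → OracleCode → OracleCode
  | rfind' : OracleCode → OracleCode

/-- Evaluation of an oracle code with oracle `g`. -/
def OracleCode.evalo (g : ℕ →. ℕ) : OracleCode → ℕ →. ℕ
  | .oracle => g
  | .zero => fun _ => Part.some 0
  | .succ => fun n => Part.some (n + 1)
  | .left => fun n => Part.some (Nat.unpair n).1
  | .right => fun n => Part.some (Nat.unpair n).2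
  | .pair cf cg => fun n => Nat.pair <$> OracleCode.evalo g cf n <*> OracleCode.evalo g cg n
  | .comp cf cg => fun n => OracleCode.evalo g cg n >>= OracleCode.evalo g cf
  | .prec cf cg =>
      Nat.unpaired fun a n =>
        n.rec (OracleCode.evalo g cf a) fun y IH => do
          let i ← IH
          OracleCode.evalo g cg (Nat.pair a (Nat.pair y i))
  | .rfind' cf =>
      Nat.unpaired fun a m =>
        (Nat.rfind fun n =>
            (fun x => decide (x = 0)) <$> OracleCode.evalo g cf (Nat.pair a (n + m))).map (· + m)

/-- View a total function as a partial function. -/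
def toP (f : ℕ → ℕ) : ℕ →. ℕ := fun n => Part.some (f n)

/-- `f` is Turing reducible to `g`. -/
def TuringReducibleFun (f g : ℕ → ℕ) : Prop :=
  ∃ c : OracleCode, c.evalo (toP g) = toP f

open Classical in
/-- Characteristic function of a set of naturals. -/
noncomputable def chi (A : Set ℕ) : ℕ → ℕ := fun n => if n ∈ A then 1 else 0

/-- A numbering of oracle codes. -/
def OracleCode.encodeC : OracleCode → ℕ
  | .oracle => 0
  | .zero => 1
  | .succ => 2
  | .left => 3
  | .right => 4
  | .pair a b => Nat.pair a.encodeC b.encodeC * 4 + 5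
  | .comp a b => Nat.pair a.encodeC b.encodeC * 4 + 6
  | .prec a b => Nat.pair a.encodeC b.encodeC * 4 + 7
  | .rfind' a => a.encodeC * 4 + 8

/-- The Turing jump of (the characteristic function) `g`. -/
def JumpSet (g : ℕ → ℕ) : Set ℕ :=
  {n | ∃ c : OracleCode, ∃ m, n = Nat.pair c.encodeC m ∧ (c.evalo (toP g) m).Dom}

/-- `∅^{(n)}`: the iterated Turing jump of the empty set. -/
noncomputable def EmptyIter : ℕ → Set ℕ
  | 0 => (∅ : Set ℕ)
  | n + 1 => JumpSet (chi (EmptyIter n))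

/-- The clopen set coded by the leaf label `e`: `∅`, `univ`, `[τ_m]`, or its complement. -/
def leafSet (e : ℕ) : Set (ℕ → ℕ) :=
  if e = 0 then ∅
  else if e = 1 then Set.univ
  else if e % 2 = 0 then Cyl (Denumerable.ofNat (List ℕ) (e / 2 - 1))
  else (Cyl (Denumerable.ofNat (List ℕ) (e / 2 - 1)))ᶜ

/-- Evaluation of a normal-form Borel code of height `m` (alternating ∃/∀ over the
labelling function `f` on tuples, `true` for Σ, `false` for Π). -/
def NFEval : ℕ → Bool → (List ℕ → ℕ) → (ℕ → ℕ) → Prop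
  | 0, _, f, x => x ∈ leafSet (f [])
  | m + 1, true, f, x => ∃ t, NFEval m false (fun l => f (t :: l)) x
  | m + 1, false, f, x => ∀ t, NFEval m true (fun l => f (t :: l)) x

/-!
A string `σ` forces a `Π` statement if no extension of `σ` forces the opposite `Σ` statement, so the
forcing relation for `Π_m` statements is decidable in `∅^{(m)}`, and forcing and truth agree for
sequences which decide every statement.

A partition is built block by block so that all its 2-coarsenings are generic at once: stage `k`
treats the finitely many colourings of the blocks `0, …, k` one after the other, and appends to the
partition the elements which make the coloured string meet the next requirements. A colouring whose
blocks so far all have colour `0` cannot be steered in this way. It is taken care of when its first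
block of colour `1` appears, since at that moment its coloured string is known: zeros, followed by a
string that may be chosen freely.

If strings forcing a witness of the `Σ_{n+2}` statement `R` occur after any number of zeros, these
choices put all 2-coarsenings into `R`. Otherwise, once sufficiently many zeros have been written,
strings forcing the failure of any given witness are dense, and every generic 2-coarsening is in
`¬R`. The first construction asks for the forcing relation at level `n + 1`, the second only at
level `n`.
-/

/-! ### Computability relative to an oracle -/

theorem computable_decode_getD (β : Type*) [Primcodable β] [Inhabited β] :
    Computable fun n : ℕ => (Encodable.decode (α := β) n).getD default :=
  Computable.option_getD Computable.decode (Computable.const default)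

section Oracle

variable {α β γ : Type*} [Primcodable α] [Primcodable β] [Primcodable γ] {O : Set (ℕ →. ℕ)}

theorem computableIn_comp {f : β → γ} {h : α → β} (hf : ComputableIn O f)
    (hh : ComputableIn O h) : ComputableIn O fun a => f (h a) := by
  refine (Nat.RecursiveIn.comp hf hh).of_eq fun n => ?_
  cases Encodable.decode (α := α) n <;> simp

theorem computableIn_pair {f : α → β} {h : α → γ} (hf : ComputableIn O f)
    (hh : ComputableIn O h) : ComputableIn O fun a => (f a, h a) := by
  refine (Nat.RecursiveIn.pair hf hh).of_eq fun n => ?_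
  cases Encodable.decode (α := α) n <;> simp [Seq.seq]

theorem computableIn_natRec {f : α → β} {h : α × ℕ × β → β} (hf : ComputableIn O f)
    (hh : ComputableIn O h) :
    ComputableIn O fun q : α × ℕ => (q.2.rec (f q.1) fun m s => h (q.1, m, s) : β) := by
  refine (Nat.RecursiveIn.prec hf hh).of_eq fun n => ?_
  cases ha : Encodable.decode (α := α) n.unpair.1 <;> simp [Encodable.decode_prod_val, ha] <;>
    induction n.unpair.2 <;> simp_all

theorem recursiveIn_rfind {p : α × ℕ → Bool} (hp : ComputableIn O p) :
    RecursiveIn O fun a => Nat.rfind fun n => Part.some (p (a, n)) := by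
  have hp' := computableIn_comp Primrec.not.computableIn hp
  refine (Nat.RecursiveIn.rfind hp').of_eq fun n => ?_
  have rfind_none : (Nat.rfind fun _ => Part.none) = Part.none :=
    Part.eq_none_iff.2 fun m hm => Part.notMem_none _ (Nat.rfind_spec hm)
  have encode_not : ∀ b : Bool, decide (Encodable.encode (!b) = 0) = b := by decide
  cases ha : Encodable.decode (α := α) n
  · simp [Encodable.decode_prod_val, ha, rfind_none]
  · simp [Encodable.decode_prod_val, ha, Part.map_id', encode_not]

theorem computableIn_find {p : α × ℕ → Bool} (hp : ComputableIn O p)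
    (H : ∀ a, ∃ n, p (a, n) = true) : ComputableIn O fun a => Nat.find (H a) :=
  (recursiveIn_rfind hp).of_eq_tot fun a => Nat.mem_rfind.2
    ⟨by simpa using (Nat.find_spec (H a)).symm, fun {m} hm => by simpa using Nat.find_min (H a) hm⟩

end Oracle

namespace OracleCode

theorem exists_evalo_eq {f g : ℕ →. ℕ} (hf : Nat.RecursiveIn {g} f) :
    ∃ c : OracleCode, c.evalo g = f := by
  induction hf with
  | zero => exact ⟨.zero, rfl⟩
  | succ => exact ⟨.succ, rfl⟩
  | left => exact ⟨.left, rfl⟩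
  | right => exact ⟨.right, rfl⟩
  | oracle _ h => exact ⟨.oracle, h.symm⟩
  | pair _ _ ihf ihh =>
    obtain ⟨⟨c, rfl⟩, d, rfl⟩ := And.intro ihf ihh
    exact ⟨.pair c d, rfl⟩
  | comp _ _ ihf ihh =>
    obtain ⟨⟨c, rfl⟩, d, rfl⟩ := And.intro ihf ihh
    exact ⟨.comp c d, rfl⟩
  | prec _ _ ihf ihh =>
    obtain ⟨⟨c, rfl⟩, d, rfl⟩ := And.intro ihf ihh
    exact ⟨.prec c d, rfl⟩
  | rfind _ ihf =>
    obtain ⟨c, rfl⟩ := ihf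
    exact ⟨.comp (.rfind' c) (.pair (.pair .left .right) .zero), funext fun n => by
      simp [evalo, Seq.seq, Part.map_id']⟩

theorem encodeC_injective : Function.Injective encodeC := by
  intro a
  induction a <;> intro b h <;> cases b <;> simp only [encodeC] at h <;>
    grind [Nat.pair_eq_pair]

theorem pair_encodeC_mem_jumpSet {c : OracleCode} {g : ℕ → ℕ} {m : ℕ} :
    Nat.pair c.encodeC m ∈ JumpSet g ↔ (c.evalo (toP g) m).Dom := by
  constructor
  · rintro ⟨d, k, hdk, hdom⟩
    obtain ⟨hcd, rfl⟩ := Nat.pair_eq_pair.1 hdk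
    rwa [encodeC_injective hcd]
  · exact fun h => ⟨c, m, rfl, h⟩

end OracleCode

theorem TuringReducibleFun.of_computableIn {f g : ℕ → ℕ} (hf : ComputableIn {toP g} f) :
    TuringReducibleFun f g :=
  OracleCode.exists_evalo_eq (RecursiveIn.iff_nat.1 hf)

/-- `P` is decidable with oracles in `O`: its characteristic function, with values in `Bool`, is
computable in `O`. -/
def DecidableIn {α : Type*} [Primcodable α] (O : Set (ℕ →. ℕ)) (P : α → Prop) : Prop :=
  ∃ p : α → Bool, ComputableIn O p ∧ ∀ a, p a = true ↔ P a

namespace DecidableIn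

variable {α β : Type*} [Primcodable α] [Primcodable β] {O : Set (ℕ →. ℕ)} {P Q : α → Prop}

theorem of_primrecPred (hP : PrimrecPred P) : DecidableIn O P := by
  obtain ⟨_, hP⟩ := hP
  exact ⟨_, hP.computableIn, fun a => decide_eq_true_iff⟩

theorem of_iff (hP : DecidableIn O P) (h : ∀ a, P a ↔ Q a) : DecidableIn O Q := by
  rwa [← funext fun a => propext (h a)]

theorem comp {P : β → Prop} {h : α → β} (hP : DecidableIn O P) (hh : ComputableIn O h) :
    DecidableIn O fun a => P (h a) := by
  obtain ⟨p, hp, hpP⟩ := hP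
  exact ⟨_, computableIn_comp hp hh, fun a => hpP _⟩

theorem not (hP : DecidableIn O P) : DecidableIn O fun a => ¬ P a := by
  obtain ⟨p, hp, hpP⟩ := hP
  exact ⟨_, computableIn_comp Primrec.not.computableIn hp, fun a => by simp [← hpP]⟩

theorem and (hP : DecidableIn O P) (hQ : DecidableIn O Q) : DecidableIn O fun a => P a ∧ Q a := by
  obtain ⟨p, hp, hpP⟩ := hP
  obtain ⟨q, hq, hqQ⟩ := hQ
  exact ⟨_, computableIn_comp Primrec.and.computableIn (computableIn_pair hp hq),
    fun a => by simp [← hpP, ← hqQ]⟩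

theorem or (hP : DecidableIn O P) (hQ : DecidableIn O Q) : DecidableIn O fun a => P a ∨ Q a :=
  (hP.not.and hQ.not).not.of_iff fun a => by tauto

theorem forall_lt {P : α × ℕ → Prop} (hP : DecidableIn O P) :
    DecidableIn O fun q : α × ℕ => ∀ i < q.2, P (q.1, i) := by
  obtain ⟨p, hp, hpP⟩ := hP
  refine ⟨_, computableIn_natRec (ComputableIn.const true) (h := fun q => q.2.2 && p (q.1, q.2.1))
    (computableIn_comp Primrec.and.computableIn (computableIn_pair
      (Primrec.snd.comp Primrec.snd).computableIn (computableIn_comp hp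
      (Primrec.fst.pair (Primrec.fst.comp Primrec.snd)).computableIn))), fun ⟨a, n⟩ => ?_⟩
  induction n with
  | zero => simp
  | succ m ih => simp_all [Nat.forall_lt_succ_right, -Order.lt_add_one_iff]

theorem exists_lt {P : α × ℕ → Prop} (hP : DecidableIn O P) :
    DecidableIn O fun q : α × ℕ => ∃ i < q.2, P (q.1, i) :=
  hP.not.forall_lt.not.of_iff fun q => by push Not; rfl

theorem forall_mem [Inhabited β] {P : α × β → Prop} (hP : DecidableIn O P) {l : α → List β}
    (hl : Computable l) : DecidableIn O fun a => ∀ b ∈ l a, P (a, b) := by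
  have key := hP.comp (h := fun q : α × ℕ => (q.1, (l q.1).getD q.2 default))
    (Computable.fst.pair (Primrec.list_getD default |>.to_comp.comp
      (hl.comp Computable.fst) Computable.snd)).computableIn
  refine (key.forall_lt.comp (h := fun a => (a, (l a).length))
    (Computable.id.pair (Computable.list_length.comp hl)).computableIn).of_iff fun a => ?_
  simp +contextual [List.forall_mem_iff_getElem]

theorem exists_choice [Inhabited β] {P : α × β → Prop} (hP : DecidableIn O P)
    (H : ∀ a, ∃ b, P (a, b)) : ∃ f : α → β, ComputableIn O f ∧ ∀ a, P (a, f a) := by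
  obtain ⟨p, hp, hpP⟩ := hP.comp (h := fun q : α × ℕ =>
    (q.1, (Encodable.decode (α := β) q.2).getD default))
    (Computable.fst.pair ((computable_decode_getD β).comp Computable.snd)).computableIn
  have H' : ∀ a, ∃ n, p (a, n) = true := fun a =>
    (H a).imp' Encodable.encode fun b hb => by simpa [hpP] using hb
  exact ⟨_, computableIn_comp (computable_decode_getD β).computableIn (computableIn_find hp H'),
    fun a => (hpP _).1 (Nat.find_spec (H' a))⟩

theorem dom_jump {f : α →. β} {g : ℕ → ℕ} (hf : RecursiveIn {toP g} f) :
    DecidableIn {toP (chi (JumpSet g))} fun a => (f a).Dom := by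
  obtain ⟨c, hc⟩ := OracleCode.exists_evalo_eq hf
  have hχ : ComputableIn {toP (chi (JumpSet g))} (chi (JumpSet g)) :=
    RecursiveIn.oracle _ rfl
  have hmem : DecidableIn {toP (chi (JumpSet g))} (· ∈ JumpSet g) :=
    ⟨_, computableIn_comp (Primrec.eq.comp Primrec.id (Primrec.const 1)).decide.computableIn
      hχ, fun a => by by_cases ha : a ∈ JumpSet g <;> simp [chi, ha]⟩
  refine (hmem.comp (h := fun a => Nat.pair c.encodeC (Encodable.encode a))
    (Primrec₂.natPair.comp (Primrec.const _) Primrec.encode).computableIn).of_iff fun a => ?_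
  simp [OracleCode.pair_encodeC_mem_jumpSet, hc]

theorem exists_jump [Inhabited β] {P : α × β → Prop} {g : ℕ → ℕ} (hP : DecidableIn {toP g} P) :
    DecidableIn {toP (chi (JumpSet g))} fun a => ∃ b, P (a, b) := by
  obtain ⟨p, hp, hpP⟩ := hP.comp (h := fun q : α × ℕ =>
    (q.1, (Encodable.decode (α := β) q.2).getD default))
    (Computable.fst.pair ((computable_decode_getD β).comp Computable.snd)).computableIn
  exact (dom_jump (recursiveIn_rfind hp)).of_iff fun a => Nat.rfind_dom.trans
    ⟨fun ⟨n, hn, _⟩ => ⟨_, (hpP _).1 (Part.mem_some_iff.1 hn).symm⟩,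
      fun ⟨b, hb⟩ => ⟨Encodable.encode b, by simpa [hpP] using hb, fun _ => trivial⟩⟩

theorem jump {g : ℕ → ℕ} (hP : DecidableIn {toP g} P) :
    DecidableIn {toP (chi (JumpSet g))} P :=
  (hP.comp (h := fun q : α × Unit => q.1) ComputableIn.fst).exists_jump.of_iff fun a => by simp

end DecidableIn

/-! ### Finite strings -/

section Strings

variable {α β : Type*}

/-- The initial segment of `z` of length `n`. -/
def initSeg (z : ℕ → α) (n : ℕ) : List α := (List.range n).map z

theorem length_initSeg (z : ℕ → α) (n : ℕ) : (initSeg z n).length = n := by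
  simp [initSeg]

theorem map_initSeg (f : α → β) (z : ℕ → α) (n : ℕ) :
    (initSeg z n).map f = initSeg (fun i => f (z i)) n := by
  simp [initSeg]

theorem getD_initSeg {z : ℕ → α} {n i : ℕ} (h : i < n) (d : α) : (initSeg z n).getD i d = z i := by
  simp [initSeg, h]

theorem initSeg_prefix_initSeg (z : ℕ → α) {m n : ℕ} (h : m ≤ n) : initSeg z m <+: initSeg z n := by
  obtain ⟨k, rfl⟩ := Nat.exists_eq_add_of_le h
  exact ⟨_, by rw [initSeg, initSeg, List.range_add, List.map_append]⟩

theorem eq_initSeg {z : ℕ → α} {l : List α} (h : ∀ i (hi : i < l.length), l[i] = z i) :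
    l = initSeg z l.length :=
  List.ext_getElem (length_initSeg _ _).symm fun i hi _ => by simp [initSeg, h i hi]

/-- `P` is inherited by end-extensions of strings. -/
def IsExtensionClosed (P : List α → Prop) : Prop :=
  ∀ ⦃σ τ⦄, σ <+: τ → P σ → P τ

theorem IsExtensionClosed.exists_append_forall_mem {P : β → List α → Prop} {Λ : α → Prop}
    (hP : ∀ b, IsExtensionClosed (P b)) {L : List β} (σ : List α)
    (hdense : ∀ b ∈ L, ∀ σ, ∃ τ, (∀ a ∈ τ, Λ a) ∧ P b (σ ++ τ)) :
    ∃ τ, (∀ a ∈ τ, Λ a) ∧ ∀ b ∈ L, P b (σ ++ τ) := by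
  induction L generalizing σ with
  | nil => exact ⟨[], by simp⟩
  | cons b L ih =>
    rw [List.forall_mem_cons] at hdense
    obtain ⟨τ₁, hΛ₁, hb⟩ := hdense.1 σ
    obtain ⟨τ₂, hΛ₂, hL⟩ := ih (σ ++ τ₁) hdense.2
    rw [List.append_assoc] at hL
    refine ⟨τ₁ ++ τ₂, List.forall_mem_append.2 ⟨hΛ₁, hΛ₂⟩, List.forall_mem_cons.2 ⟨?_, hL⟩⟩
    rw [← List.append_assoc]
    exact hP b (List.prefix_append _ _) hb

theorem ListOrdered.append {σ τ : List ℕ} (hσ : ListOrdered σ)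
    (hτ : ∀ v ∈ τ, ∀ j < v, j ∈ σ) : ListOrdered (σ ++ τ) := by
  intro n hn j hj
  rcases lt_or_ge n σ.length with h | h
  · obtain ⟨m, hm, rfl⟩ := hσ n h j (by rwa [List.getD_append _ _ _ _ h] at hj)
    exact ⟨m, hm, List.getD_append _ _ _ _ (hm.trans h)⟩
  · rw [List.getD_append_right _ _ _ _ h] at hj
    have hlt : n - σ.length < τ.length := by rw [List.length_append] at hn; omega
    rw [List.getD_eq_getElem _ _ hlt] at hj
    obtain ⟨m, hm, rfl⟩ := List.getElem_of_mem (hτ _ (List.getElem_mem hlt) j hj)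
    exact ⟨m, hm.trans_le h, by rw [List.getD_append _ _ _ _ hm, List.getD_eq_getElem _ _ hm]⟩

theorem primrecPred_true_mem : PrimrecPred fun ρ : List Bool => true ∈ ρ :=
  (PrimrecPred.exists_mem_list (Primrec.eq.comp Primrec.id (Primrec.const true))).of_eq fun ρ => by
    simp

theorem primrecPred_startsWith_replicate (N : ℕ) :
    PrimrecPred fun ρ : List Bool => List.replicate N false <+: ρ :=
  (Primrec.eq.comp (Primrec.const (List.replicate N false))
    (Primrec.list_take.comp (Primrec.const N) Primrec.id)).of_eq fun ρ => by
      rw [List.prefix_iff_eq_take, List.length_replicate, id]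

/-- The list of all binary strings of length `k`. -/
def binaryStrings : ℕ → List (List Bool)
  | 0 => [[]]
  | k + 1 => (binaryStrings k).flatMap fun C => [false :: C, true :: C]

theorem mem_binaryStrings {k : ℕ} {C : List Bool} : C ∈ binaryStrings k ↔ C.length = k := by
  induction k generalizing C with
  | zero => simp [binaryStrings]
  | succ k ih => rcases C with _ | ⟨_ | _, C⟩ <;> simp [binaryStrings, ih]

theorem primrec_binaryStrings : Primrec binaryStrings := by
  refine (Primrec.nat_rec₁ (f := fun _ L => L.flatMap fun C => [false :: C, true :: C]) [[]]
    (Primrec.list_flatMap Primrec.snd (Primrec.list_cons.comp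
      (Primrec.list_cons.comp (Primrec.const false) Primrec.snd) (Primrec.list_cons.comp
        (Primrec.list_cons.comp (Primrec.const true) Primrec.snd)
        (Primrec.const []))).to₂).to₂).of_eq fun k => ?_
  induction k with
  | zero => rfl
  | succ k ih => simp_all [binaryStrings]

/-- The binary string obtained from `s` by giving the block `0` the colour `false` and the block
`i + 1` the colour `C[i]`. -/
def paint (C : List Bool) (s : List ℕ) : List Bool := s.map fun v => (false :: C).getD v false

theorem true_mem_of_true_mem_paint {C : List Bool} {s : List ℕ} (h : true ∈ paint C s) :
    true ∈ C := by
  obtain ⟨_ | v, -, hv⟩ := List.mem_map.1 h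
  · simp at hv
  · grind

theorem exists_paint_eq {C : List Bool} (hC : true ∈ C) (ρ : List Bool) :
    ∃ s, (∀ v ∈ s, v ≤ C.length) ∧ paint C s = ρ := by
  obtain ⟨i, hi, hCi⟩ := List.getElem_of_mem hC
  refine ⟨ρ.map fun b => bif b then i + 1 else 0, by grind, ?_⟩
  rw [paint, List.map_map]
  exact List.map_id'' (by rintro (_ | _) <;> simp [hi, hCi]) ρ

theorem map_eq_paint {c : ℕ → Bool} (hc : c 0 = false) {k : ℕ} {s : List ℕ}
    (hs : ∀ v ∈ s, v ≤ k) : s.map c = paint (initSeg (fun i => c (i + 1)) k) s := by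
  refine List.map_congr_left fun v hv => ?_
  obtain _ | v := v
  · simpa
  · simp [initSeg, show v < k from hs _ hv]

theorem primrec_paint : Primrec₂ paint :=
  (Primrec.list_map Primrec.snd ((Primrec.list_getD false).comp
    (Primrec.list_cons.comp (Primrec.const false) (Primrec.fst.comp Primrec.fst))
    Primrec.snd).to₂).to₂

end Strings

/-! ### Partitions built block by block -/

/-- A sequence of strings, starting with `[0]`, each of which is extended by the next one so that
`X (k + 1)` consists of the blocks `0, …, k + 1`. -/
structure IsTower (X : ℕ → List ℕ) : Prop where
  zero : X 0 = [0]
  succ : ∀ k, ∃ τ, X (k + 1) = X k ++ τ ∧ k + 1 ∈ τ ∧ ∀ v ∈ τ, v ≤ k + 1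

/-- The partition with initial segments `X k`. The value at `n` is read off `X n`, which has length
greater than `n` if `X` is a tower. -/
def towerLimit (X : ℕ → List ℕ) (n : ℕ) : ℕ := (X n).getD n 0

namespace IsTower

variable {X : ℕ → List ℕ}

theorem mem_iff (hX : IsTower X) {k v : ℕ} : v ∈ X k ↔ v ≤ k := by
  induction k with
  | zero => simp [hX.zero]
  | succ k ih =>
    obtain ⟨τ, hτ, hmem, hle⟩ := hX.succ k
    rw [hτ, List.mem_append, ih]
    constructor
    · rintro (h | h)
      exacts [h.trans k.le_succ, hle v h]
    · intro h
      rcases h.lt_or_eq with h | rfl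
      exacts [.inl (Nat.le_of_lt_succ h), .inr hmem]

theorem isPrefix (hX : IsTower X) {k l : ℕ} (h : k ≤ l) : X k <+: X l := by
  induction l, h using Nat.le_induction with
  | base => exact List.prefix_rfl
  | succ l _ ih =>
    obtain ⟨τ, hτ, -⟩ := hX.succ l
    exact ih.trans (hτ ▸ List.prefix_append _ _)

theorem lt_length (hX : IsTower X) (k : ℕ) : k < (X k).length := by
  induction k with
  | zero => simp [hX.zero]
  | succ k ih =>
    obtain ⟨τ, hτ, hmem, -⟩ := hX.succ k
    have := List.length_pos_of_mem hmem
    rw [hτ, List.length_append]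
    omega

theorem listOrdered (hX : IsTower X) (k : ℕ) : ListOrdered (X k) := by
  induction k with
  | zero => simp [hX.zero, ListOrdered]
  | succ k ih =>
    obtain ⟨τ, hτ, -, hle⟩ := hX.succ k
    exact hτ ▸ ih.append fun v hv j hj => hX.mem_iff.2 (Nat.le_of_lt_succ (hj.trans_le (hle v hv)))

theorem eq_initSeg (hX : IsTower X) (k : ℕ) : X k = initSeg (towerLimit X) (X k).length := by
  refine _root_.eq_initSeg fun i hi => ?_
  have hi' := hX.lt_length i
  rw [towerLimit, List.getD_eq_getElem _ _ hi']
  rcases le_total i k with h | h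
  · exact ((hX.isPrefix h).getElem hi').symm
  · exact (hX.isPrefix h).getElem hi

theorem towerLimit_mem_omegaPartInf (hX : IsTower X) : towerLimit X ∈ OmegaPartInf := by
  refine ⟨fun n i hi j hj => ?_, fun v => ?_⟩
  · obtain ⟨m, hm, hmj⟩ := hX.listOrdered n n (hX.lt_length n) j (hj.trans_eq hi.symm)
    refine ⟨m, hm, ?_⟩
    rwa [hX.eq_initSeg n, getD_initSeg (hm.trans (hX.lt_length n))] at hmj
  · have hv : v ∈ X v := hX.mem_iff.2 le_rfl
    rw [hX.eq_initSeg v] at hv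
    obtain ⟨n, -, hn⟩ := List.mem_map.1 hv
    exact ⟨n, hn⟩

end IsTower

theorem exists_color_of_coarsening {x y : ℕ → ℕ} (hx : x ∈ OmegaPartInf)
    (hy : y ∈ Coarsenings x 2) : ∃ c : ℕ → Bool,
      (∀ n, y n = (c (x n)).toNat) ∧ c 0 = false ∧ ∃ j, c j = true := by
  obtain ⟨⟨hord, hlt, hsurj⟩, hcoarse⟩ := hy
  have eq_zero_of_ordered : ∀ {u : ℕ → ℕ}, IsOrderedFn u → u 0 = 0 := fun hu =>
    by_contra fun h => by simpa using hu 0 _ rfl 0 (Nat.pos_of_ne_zero h)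
  choose p hp using hx.2
  have hyp : ∀ n, y n = y (p (x n)) := fun n => hcoarse _ _ (hp (x n)).symm
  refine ⟨fun v => decide (y (p v) = 1), fun n => ?_, ?_, ?_⟩
  · have := hlt n
    grind [Bool.toNat]
  · have := hyp 0
    rw [eq_zero_of_ordered hx.1, eq_zero_of_ordered hord] at this
    simp [← this]
  · obtain ⟨n, hn⟩ := hsurj 1 one_lt_two
    exact ⟨x n, by simpa using (hyp n).symm.trans hn⟩

theorem exists_first_true {c : ℕ → Bool} (hc₀ : c 0 = false) (hc : ∃ j, c j = true) :
    ∃ k, (∀ v ≤ k, c v = false) ∧ c (k + 1) = true := by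
  obtain ⟨k, hk⟩ := Nat.exists_eq_add_one_of_ne_zero (n := Nat.find hc) fun h => by
    simpa [h, hc₀] using Nat.find_spec hc
  exact ⟨k, fun v hv => by simpa using Nat.find_min hc (hk ▸ Nat.lt_succ_of_le hv),
    hk ▸ Nat.find_spec hc⟩

/-! ### Generic partitions -/

/-- A property of binary strings that can be met after any number of zeros. A colouring of a
partition under construction meets it at the stage where its first block of colour `true` is
introduced. -/
structure IsBirthCondition (S : List Bool → Prop) : Prop where
  ext : IsExtensionClosed S
  true_mem : ∀ ρ, S ρ → true ∈ ρ
  exists_append : ∀ N, ∃ τ, S (List.replicate N false ++ τ)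

/-- A family `D` of requirements on binary strings each of which can be met by extending any
string in `S`. -/
structure IsDenseAbove {ι : Type*} (S : List Bool → Prop) (D : ι × List Bool → Prop) : Prop where
  ext : ∀ i, IsExtensionClosed fun ρ => D (i, ρ)
  exists_append : ∀ i ρ, S ρ → ∃ τ, D (i, ρ ++ τ)

theorem IsDenseAbove.and {ι κ : Type*} {S : List Bool → Prop} {D : ι × List Bool → Prop}
    {E : κ × List Bool → Prop} (hS : IsExtensionClosed S) (hD : IsDenseAbove S D)
    (hE : IsDenseAbove S E) :
    IsDenseAbove S fun q : (ι × κ) × List Bool => D (q.1.1, q.2) ∧ E (q.1.2, q.2) where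
  ext i σ τ h := And.imp (hD.ext i.1 h) (hE.ext i.2 h)
  exists_append i ρ hρ := by
    obtain ⟨σ, hσ⟩ := hD.exists_append i.1 ρ hρ
    obtain ⟨τ, hτ⟩ := hE.exists_append i.2 (ρ ++ σ) (hS (List.prefix_append _ _) hρ)
    exact ⟨σ ++ τ, hD.ext i.1 ⟨τ, by simp⟩ hσ, by simpa using hτ⟩

/-- The extension of the string `s` by `τ` at stage `k` introduces the block `k + 1`. If this is the
first block of colour `true`, the coloured string is in `S` afterwards; all colourings which were
in `S` before meet the requirements `D 0, …, D k`. -/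
structure IsStep (S : List Bool → Prop) (D : ℕ × List Bool → Prop) (k : ℕ) (s τ : List ℕ) :
    Prop where
  le : ∀ v ∈ τ, v ≤ k + 1
  birth : S (List.replicate s.length false ++ τ.map fun v => decide (v = k + 1))
  dense : ∀ C ∈ binaryStrings (k + 1), S (paint C s) → ∀ e < k + 1, D (e, paint C (s ++ τ))

section Step

variable {S : List Bool → Prop} {D : ℕ × List Bool → Prop}

theorem exists_isStep (hS : IsBirthCondition S) (hD : IsDenseAbove S D) (k : ℕ) (s : List ℕ) :
    ∃ τ, IsStep S D k s τ := by
  obtain ⟨β, hβ⟩ := hS.exists_append s.length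
  have hpaint : (β.map fun b => bif b then k + 1 else 0).map (fun v => decide (v = k + 1)) = β := by
    rw [List.map_map]
    exact List.map_id'' (by rintro (_ | _) <;> simp) β
  set σ := β.map fun b => bif b then k + 1 else 0
  obtain ⟨τ, hτ, hD'⟩ := IsExtensionClosed.exists_append_forall_mem
    (P := fun q : List Bool × ℕ => fun τ => S (paint q.1 s) → D (q.2, paint q.1 (s ++ τ)))
    (Λ := (· ≤ k + 1)) (L := binaryStrings (k + 1) ×ˢ List.range (k + 1))
    (fun q τ₁ τ₂ h hq hs => hD.ext q.2 ((List.prefix_append_right_inj s |>.2 h).map _) (hq hs)) σ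
    fun ⟨C, e⟩ hq τ₁ => by
      by_cases hs : S (paint C s)
      · obtain ⟨ρ, hρ⟩ := hD.exists_append e (paint C (s ++ τ₁))
          (hS.ext ((List.prefix_append _ _).map _) hs)
        obtain ⟨t, ht, rfl⟩ := exists_paint_eq (true_mem_of_true_mem_paint (hS.true_mem _ hs)) ρ
        have hC : C.length = k + 1 := mem_binaryStrings.1 (List.mem_product.1 hq).1
        exact ⟨t, fun v hv => (ht v hv).trans_eq hC, fun _ => by simpa [paint] using hρ⟩
      · exact ⟨[], by simp, fun h => absurd h hs⟩
  refine ⟨σ ++ τ, ?_, ?_, fun C hC hs e he => ?_⟩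
  · exact List.forall_mem_append.2 ⟨by grind, hτ⟩
  · rw [List.map_append, hpaint, ← List.append_assoc]
    exact hS.ext (List.prefix_append _ _) hβ
  · exact hD' (C, e) (List.mem_product.2 ⟨hC, List.mem_range.2 he⟩) hs

theorem IsStep.succ_mem {k : ℕ} {s τ : List ℕ} (hS : ∀ ρ, S ρ → true ∈ ρ)
    (h : IsStep S D k s τ) : k + 1 ∈ τ := by
  simpa using hS _ h.birth

theorem decidableIn_isStep {O : Set (ℕ →. ℕ)} (hS : DecidableIn O S) (hD : DecidableIn O D) :
    DecidableIn O fun q : (ℕ × List ℕ) × List ℕ => IsStep S D q.1.1 q.1.2 q.2 := by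
  have hk : Primrec fun q : (ℕ × List ℕ) × List ℕ => q.1.1 + 1 :=
    Primrec.succ.comp (Primrec.fst.comp Primrec.fst)
  have hs : Primrec fun q : (ℕ × List ℕ) × List ℕ => q.1.2 := Primrec.snd.comp Primrec.fst
  have hle : DecidableIn O fun q : (ℕ × List ℕ) × List ℕ => ∀ v ∈ q.2, v ≤ q.1.1 + 1 :=
    (DecidableIn.of_primrecPred (Primrec.nat_le.comp Primrec.snd (hk.comp Primrec.fst))).forall_mem
      Computable.snd
  have hbirth := hS.comp (h := fun q : (ℕ × List ℕ) × List ℕ =>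
    List.replicate q.1.2.length false ++ q.2.map fun v => decide (v = q.1.1 + 1))
    (Primrec.list_append.comp
      ((Primrec.list_map (Primrec.list_range.comp (Primrec.list_length.comp hs))
        (Primrec.const false).to₂).of_eq fun q => by simp)
      (Primrec.list_map Primrec.snd
        (Primrec.eq.comp Primrec.snd (hk.comp Primrec.fst)).decide.to₂)).computableIn
  have hdense := ((hS.comp (h := fun q : ((ℕ × List ℕ) × List ℕ) × List Bool => paint q.2 q.1.1.2)
    (primrec_paint.comp Primrec.snd (hs.comp Primrec.fst)).computableIn).not.or
    ((hD.comp (h := fun q : (((ℕ × List ℕ) × List ℕ) × List Bool) × ℕ =>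
        (q.2, paint q.1.2 (q.1.1.1.2 ++ q.1.1.2)))
      (Primrec.snd.pair (primrec_paint.comp (Primrec.snd.comp Primrec.fst)
        (Primrec.list_append.comp (hs.comp (Primrec.fst.comp Primrec.fst))
          (Primrec.snd.comp (Primrec.fst.comp Primrec.fst))))).computableIn).forall_lt.comp
      (Primrec.id.pair (hk.comp Primrec.fst)).computableIn)).forall_mem
      (primrec_binaryStrings.comp hk).to_comp
  refine (hle.and (hbirth.and hdense)).of_iff fun q => ⟨fun h => ?_, fun h => ?_⟩
  · exact ⟨h.1, h.2.1, fun C hC => or_iff_not_imp_left.1 (h.2.2 C hC) ∘ not_not.2⟩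
  · exact ⟨h.le, h.birth, fun C hC => or_iff_not_imp_left.2 (h.dense C hC ∘ not_not.1)⟩

theorem exists_forall_isStep {O : Set (ℕ →. ℕ)} (hS : IsBirthCondition S) (hD : IsDenseAbove S D)
    (hSO : DecidableIn O S) (hDO : DecidableIn O D) :
    ∃ X : ℕ → List ℕ, ComputableIn O X ∧ X 0 = [0] ∧
      ∀ k, ∃ τ, X (k + 1) = X k ++ τ ∧ IsStep S D k (X k) τ := by
  obtain ⟨F, hF, hstep⟩ := (decidableIn_isStep hSO hDO).exists_choice fun q =>
    exists_isStep hS hD q.1 q.2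
  refine ⟨_, computableIn_comp (computableIn_natRec (ComputableIn.const [0])
    (h := fun q : Unit × ℕ × List ℕ => q.2.2 ++ F q.2)
    (computableIn_comp Primrec.list_append.computableIn (computableIn_pair
      (Primrec.snd.comp Primrec.snd).computableIn (computableIn_comp hF ComputableIn.snd))))
    (computableIn_pair (ComputableIn.const ()) ComputableIn.id), rfl,
    fun k => ⟨_, rfl, hstep (k, _)⟩⟩

theorem computableIn_towerLimit {O : Set (ℕ →. ℕ)} {X : ℕ → List ℕ} (hX : ComputableIn O X) :
    ComputableIn O (towerLimit X) :=
  computableIn_comp (f := fun q : List ℕ × ℕ => q.1.getD q.2 0) (Primrec.list_getD 0).computableIn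
    (computableIn_pair hX ComputableIn.id)

theorem IsStep.birth_map {k : ℕ} {s τ : List ℕ} {c : ℕ → Bool} (h : IsStep S D k s τ)
    (hs : ∀ v ∈ s, v ≤ k) (hlt : ∀ v ≤ k, c v = false) (hk : c (k + 1) = true) :
    S ((s ++ τ).map c) := by
  have hold : s.map c = List.replicate s.length false :=
    List.eq_replicate_iff.2 ⟨List.length_map _, List.forall_mem_map.2 fun v hv => hlt v (hs v hv)⟩
  have hnew : τ.map c = τ.map fun v => decide (v = k + 1) :=
    List.map_congr_left fun v hv => by
      rcases (h.le v hv).lt_or_eq with hv' | rfl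
      · simpa [hv'.ne] using hlt v (Nat.le_of_lt_succ hv')
      · simpa using hk
  rw [List.map_append, hold, hnew]
  exact h.birth

theorem IsStep.dense_map {k e : ℕ} {s τ : List ℕ} {c : ℕ → Bool} (h : IsStep S D k s τ)
    (hs : ∀ v ∈ s, v ≤ k) (hc₀ : c 0 = false) (hsc : S (s.map c)) (he : e < k + 1) :
    D (e, (s ++ τ).map c) := by
  have hs' : ∀ v ∈ s, v ≤ k + 1 := fun v hv => (hs v hv).trans k.le_succ
  rw [map_eq_paint hc₀ hs'] at hsc
  rw [map_eq_paint hc₀ (List.forall_mem_append.2 ⟨hs', h.le⟩)]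
  exact h.dense _ (mem_binaryStrings.2 (length_initSeg _ _)) hsc e he

theorem exists_initSeg_of_isStep {X : ℕ → List ℕ} (hS : IsExtensionClosed S) (hX : IsTower X)
    (hstep : ∀ k, ∃ τ, X (k + 1) = X k ++ τ ∧ IsStep S D k (X k) τ) {c : ℕ → Bool}
    (hc₀ : c 0 = false) (hc : ∃ j, c j = true) :
    (∃ n, S (initSeg (fun n => c (towerLimit X n)) n)) ∧
      ∀ e, ∃ n, D (e, initSeg (fun n => c (towerLimit X n)) n) := by
  have hmap : ∀ k, (X k).map c = initSeg (fun n => c (towerLimit X n)) (X k).length := fun k => by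
    conv_lhs => rw [hX.eq_initSeg k, map_initSeg]
  have hle : ∀ k, ∀ v ∈ X k, v ≤ k := fun k v => hX.mem_iff.1
  obtain ⟨k₀, hlt, hk₀⟩ := exists_first_true hc₀ hc
  have hbirth : S ((X (k₀ + 1)).map c) := by
    obtain ⟨τ, hτ, h⟩ := hstep k₀
    exact hτ ▸ h.birth_map (hle k₀) hlt hk₀
  refine ⟨⟨_, hmap _ ▸ hbirth⟩, fun e => ?_⟩
  obtain ⟨τ, hτ, h⟩ := hstep (max (k₀ + 1) e)
  have hDe := h.dense_map (hle _) hc₀ (hS ((hX.isPrefix (le_max_left _ _)).map c) hbirth)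
    (Nat.lt_succ_of_le (le_max_right _ _))
  rw [← hτ, hmap] at hDe
  exact ⟨_, hDe⟩

end Step

theorem exists_generic_partition {ι : Type*} [Primcodable ι] [Inhabited ι] {S : List Bool → Prop}
    {D : ι × List Bool → Prop} {g : ℕ → ℕ} (hS : IsBirthCondition S) (hD : IsDenseAbove S D)
    (hSg : DecidableIn {toP g} S) (hDg : DecidableIn {toP g} D) :
    ∃ x ∈ OmegaPartInf, TuringReducibleFun x g ∧ ∀ y ∈ Coarsenings x 2, ∃ z : ℕ → Bool,
      y = (fun n => (z n).toNat) ∧ (∃ n, S (initSeg z n)) ∧ ∀ i, ∃ n, D (i, initSeg z n) := by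
  let dec : ℕ → ι := fun e => (Encodable.decode e).getD default
  have hdec : ComputableIn {toP g} fun q : ℕ × List Bool => (dec q.1, q.2) :=
    (((computable_decode_getD ι).comp Computable.fst).pair Computable.snd).computableIn
  have hD' : IsDenseAbove S fun q : ℕ × List Bool => D (dec q.1, q.2) :=
    ⟨fun e => hD.ext (dec e), fun e => hD.exists_append (dec e)⟩
  obtain ⟨X, hXg, hX₀, hX⟩ := exists_forall_isStep hS hD' hSg (hDg.comp hdec)
  have hT : IsTower X := ⟨hX₀, fun k => by
    obtain ⟨τ, hτ, h⟩ := hX k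
    exact ⟨τ, hτ, h.succ_mem hS.true_mem, h.le⟩⟩
  refine ⟨towerLimit X, hT.towerLimit_mem_omegaPartInf,
    .of_computableIn (computableIn_towerLimit hXg), fun y hy => ?_⟩
  obtain ⟨c, hyc, hc₀, hc⟩ := exists_color_of_coarsening hT.towerLimit_mem_omegaPartInf hy
  obtain ⟨hSz, hDz⟩ := exists_initSeg_of_isStep hS.ext hT hX hc₀ hc
  exact ⟨_, funext hyc, hSz, fun i => by simpa [dec] using hDz (Encodable.encode i)⟩

/-! ### Forcing -/

/-- The string which determines the clopen set with label `e`. -/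
def leafString (e : ℕ) : List ℕ := Denumerable.ofNat (List ℕ) (e / 2 - 1)

/-- The colouring which starts with the binary string `σ` and continues with zeros. -/
def padZero (σ : List Bool) (n : ℕ) : ℕ := (σ.getD n false).toNat

theorem mem_leafSet_congr {e : ℕ} {x y : ℕ → ℕ} (h : ∀ i < (leafString e).length, x i = y i) :
    x ∈ leafSet e ↔ y ∈ leafSet e := by
  have : x ∈ Cyl (leafString e) ↔ y ∈ Cyl (leafString e) :=
    forall₂_congr fun i hi => by rw [h i hi]
  unfold leafSet
  unfold leafString at this
  split_ifs <;> simp [this]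

theorem primrec_leafString : Primrec leafString :=
  (Primrec.ofNat (List ℕ)).comp (Primrec.nat_sub.comp
    (Primrec.nat_div.comp Primrec.id (Primrec.const 2)) (Primrec.const 1))

theorem primrecPred_padZero_mem_cyl :
    PrimrecPred fun q : ℕ × List Bool => padZero q.2 ∈ Cyl (leafString q.1) := by
  have : PrimrecRel fun (i : ℕ) (q : ℕ × List Bool) =>
      padZero q.2 i = (leafString q.1).getD i 0 :=
    Primrec.eq.comp ((Primrec.dom_finite Bool.toNat).comp ((Primrec.list_getD false).comp
      (Primrec.snd.comp Primrec.snd) Primrec.fst))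
      ((Primrec.list_getD 0).comp (primrec_leafString.comp (Primrec.fst.comp Primrec.snd))
        Primrec.fst)
  exact (this.forall_mem_list.comp (Primrec.list_range.comp (Primrec.list_length.comp
    (primrec_leafString.comp Primrec.fst))) Primrec.id).of_eq fun q => by simp [Cyl]

theorem primrecPred_padZero_mem_leafSet :
    PrimrecPred fun q : ℕ × List Bool => padZero q.2 ∈ leafSet q.1 := by
  have hcyl := primrecPred_padZero_mem_cyl
  have hzero : PrimrecPred fun q : ℕ × List Bool => q.1 = 0 :=
    Primrec.eq.comp Primrec.fst (Primrec.const 0)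
  have hone : PrimrecPred fun q : ℕ × List Bool => q.1 = 1 :=
    Primrec.eq.comp Primrec.fst (Primrec.const 1)
  have heven : PrimrecPred fun q : ℕ × List Bool => q.1 % 2 = 0 :=
    Primrec.eq.comp (Primrec.nat_mod.comp Primrec.fst (Primrec.const 2)) (Primrec.const 0)
  refine (hzero.not.and (hone.or ((heven.and hcyl).or (heven.not.and hcyl.not)))).of_eq fun q => ?_
  unfold leafSet leafString
  split_ifs <;> simp_all

/-- The binary string `σ` forces the `Π_m` statement with code `l ↦ f (p ++ l)`; for `b = false`
this is the negation of the corresponding `Σ_m` statement. Witnesses `t` are only considered once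
they are smaller than the length of the string, so that the search for them is bounded. -/
def Forces (f : List ℕ → ℕ) : ℕ → Bool → List ℕ → List Bool → Prop
  | 0, b, p, σ => (leafString (f p)).length ≤ σ.length ∧
      (padZero σ ∈ leafSet (f p) ↔ b = true)
  | m + 1, b, p, σ => ∀ τ, ∀ t < (σ ++ τ).length, ¬ Forces f m (!b) (p ++ [t]) (σ ++ τ)

/-- The binary string `σ` forces an instance of the `Σ_{m+1}` statement which asserts the `Π_m`
statement with code `l ↦ f (p ++ t :: l)` and polarity `b` for some `t`. -/
def ForcesSigma (f : List ℕ → ℕ) (m : ℕ) (b : Bool) (p : List ℕ) (σ : List Bool) : Prop :=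
  ∃ t < σ.length, Forces f m b (p ++ [t]) σ

/-- The `Π_m` statement with code `l ↦ f (p ++ l)` and polarity `b` holds of `x`. -/
def PiHolds (f : List ℕ → ℕ) (m : ℕ) (b : Bool) (p : List ℕ) (x : ℕ → ℕ) : Prop :=
  NFEval m (!b) (fun l => f (p ++ l)) x ↔ b = true

/-- Each `Π_{m+1}` statement or its negation is forced by an initial segment of `z`. -/
def DecidesAt (f : List ℕ → ℕ) (m : ℕ) (z : ℕ → Bool) : Prop :=
  ∀ b p, ∃ n, Forces f (m + 1) b p (initSeg z n) ∨ ForcesSigma f m (!b) p (initSeg z n)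

section Forcing

variable {f : List ℕ → ℕ}

theorem forces_succ_iff {m : ℕ} {b : Bool} {p : List ℕ} {σ : List Bool} :
    Forces f (m + 1) b p σ ↔ ∀ τ, ¬ ForcesSigma f m (!b) p (σ ++ τ) := by
  simp [Forces, ForcesSigma]

theorem isExtensionClosed_forces (m : ℕ) (b : Bool) (p : List ℕ) :
    IsExtensionClosed (Forces f m b p) := by
  rintro σ _ ⟨τ, rfl⟩ h
  cases m with
  | zero =>
    refine ⟨h.1.trans (List.prefix_append σ τ).length_le, ?_⟩
    rw [← h.2]
    refine mem_leafSet_congr fun i hi => ?_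
    rw [padZero, padZero, List.getD_append _ _ _ _ (hi.trans_le h.1)]
  | succ m =>
    intro ρ
    rw [List.append_assoc]
    exact h (τ ++ ρ)

theorem isExtensionClosed_forcesSigma (m : ℕ) (b : Bool) (p : List ℕ) :
    IsExtensionClosed (ForcesSigma f m b p) :=
  fun _ _ hστ ⟨t, ht, h⟩ => ⟨t, ht.trans_le hστ.length_le, isExtensionClosed_forces m b _ hστ h⟩

theorem piHolds_succ_iff {m : ℕ} {b : Bool} {p : List ℕ} {x : ℕ → ℕ} :
    PiHolds f (m + 1) b p x ↔ ∀ t, ¬ PiHolds f m (!b) (p ++ [t]) x := by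
  cases b <;> simp [PiHolds, NFEval]

theorem nfEval_true_iff_exists_piHolds {m : ℕ} {x : ℕ → ℕ} :
    NFEval (m + 1) true f x ↔ ∃ t, PiHolds f m true [t] x := by
  simp [NFEval, PiHolds]

theorem forces_zero_initSeg_iff {b : Bool} {p : List ℕ} {z : ℕ → Bool} {n : ℕ} :
    Forces f 0 b p (initSeg z n) ↔
      (leafString (f p)).length ≤ n ∧ PiHolds f 0 b p fun n => (z n).toNat := by
  simp only [Forces, length_initSeg, PiHolds, NFEval, List.append_nil]
  refine and_congr_right fun h => ?_
  rw [mem_leafSet_congr fun i hi => ?_]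
  rw [padZero, getD_initSeg (hi.trans_le h)]

theorem piHolds_iff_exists_forces {m : ℕ} {b : Bool} {p : List ℕ} {z : ℕ → Bool}
    (hz : ∀ k < m, DecidesAt f k z) :
    PiHolds f m b p (fun n => (z n).toNat) ↔ ∃ n, Forces f m b p (initSeg z n) := by
  induction m generalizing b p with
  | zero => exact ⟨fun h => ⟨_, forces_zero_initSeg_iff.2 ⟨le_rfl, h⟩⟩,
      fun ⟨n, h⟩ => (forces_zero_initSeg_iff.1 h).2⟩
  | succ m ih =>
    replace ih := fun {b p} => @ih b p fun k hk => hz k (hk.trans m.lt_succ_self)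
    simp only [piHolds_succ_iff, ih]
    constructor
    · intro h
      obtain ⟨n, hn | ⟨t, -, hn⟩⟩ := hz m m.lt_succ_self b p
      exacts [⟨n, hn⟩, absurd ⟨n, hn⟩ (h t)]
    · rintro ⟨n, hn⟩ t ⟨k, hk⟩
      obtain ⟨τ, hτ⟩ := initSeg_prefix_initSeg z (le_max_left n (max k (t + 1)))
      refine forces_succ_iff.1 hn τ (hτ ▸ ⟨t, ?_, ?_⟩)
      · rw [length_initSeg]
        omega
      · exact isExtensionClosed_forces _ _ _ (initSeg_prefix_initSeg z (by omega)) hk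

theorem decidableIn_forces_zero {O : Set (ℕ →. ℕ)} (hf : Computable f) :
    DecidableIn O fun q : Bool × List ℕ × List Bool => Forces f 0 q.1 q.2.1 q.2.2 := by
  have hlen : PrimrecPred fun q : ℕ × List Bool => (leafString q.1).length ≤ q.2.length :=
    Primrec.nat_le.comp (Primrec.list_length.comp (primrec_leafString.comp Primrec.fst))
      (Primrec.list_length.comp Primrec.snd)
  have hb : PrimrecPred fun b : Bool => b = true := Primrec.eq.comp Primrec.id (Primrec.const true)
  have hleaf : ComputableIn O fun q : Bool × List ℕ × List Bool => (f q.2.1, q.2.2) :=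
    ((hf.comp (Computable.fst.comp Computable.snd)).pair
      (Computable.snd.comp Computable.snd)).computableIn
  have hlen' := (DecidableIn.of_primrecPred hlen).comp hleaf
  have hmem := (DecidableIn.of_primrecPred primrecPred_padZero_mem_leafSet).comp hleaf
  have hb' := (DecidableIn.of_primrecPred hb).comp
    (h := fun q : Bool × List ℕ × List Bool => q.1) (ComputableIn.fst (O := O))
  exact (hlen'.and ((hmem.and hb').or (hmem.not.and hb'.not))).of_iff fun q => by
    rw [Forces]
    exact and_congr_right fun _ => iff_iff_and_or_not_and_not.symm

theorem decidableIn_forcesSigma_of_forces {O : Set (ℕ →. ℕ)} {m : ℕ}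
    (h : DecidableIn O fun q : ℕ × Bool × List ℕ × List Bool =>
      q.1 ≤ m ∧ Forces f q.1 q.2.1 q.2.2.1 q.2.2.2) :
    DecidableIn O fun q : ℕ × Bool × List ℕ × List Bool =>
      q.1 ≤ m ∧ ForcesSigma f q.1 q.2.1 q.2.2.1 q.2.2.2 := by
  have ht := h.comp (h := fun q : (ℕ × Bool × List ℕ × List Bool) × ℕ =>
    (q.1.1, q.1.2.1, q.1.2.2.1 ++ [q.2], q.1.2.2.2)) (Primrec.pair (Primrec.fst.comp Primrec.fst)
      (Primrec.pair (Primrec.fst.comp (Primrec.snd.comp Primrec.fst)) (Primrec.pair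
        (Primrec.list_concat.comp
          (Primrec.fst.comp (Primrec.snd.comp (Primrec.snd.comp Primrec.fst))) Primrec.snd)
        (Primrec.snd.comp (Primrec.snd.comp (Primrec.snd.comp Primrec.fst)))))).computableIn
  refine (ht.exists_lt.comp (h := fun q => (q, q.2.2.2.length)) (Primrec.id.pair
    (Primrec.list_length.comp
      (Primrec.snd.comp (Primrec.snd.comp Primrec.snd)))).computableIn).of_iff fun q => ?_
  simp only [ForcesSigma, ← exists_and_left, and_left_comm]

theorem decidableIn_forces (hf : Computable f) (m : ℕ) :
    DecidableIn {toP (chi (EmptyIter m))} fun q : ℕ × Bool × List ℕ × List Bool =>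
      q.1 ≤ m ∧ Forces f q.1 q.2.1 q.2.2.1 q.2.2.2 := by
  have hlevel : ∀ {O} (k : ℕ), DecidableIn O fun q : ℕ × Bool × List ℕ × List Bool => q.1 = k :=
    fun k => .of_primrecPred (Primrec.eq.comp Primrec.fst (Primrec.const k))
  induction m with
  | zero =>
    refine ((hlevel 0).and ((decidableIn_forces_zero hf).comp ComputableIn.snd)).of_iff ?_
    rintro ⟨_ | k, q⟩ <;> simp
  | succ m ih =>
    have hsucc := ((decidableIn_forcesSigma_of_forces ih).comp
      (h := fun q : (ℕ × Bool × List ℕ × List Bool) × List Bool =>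
        (m, !q.1.2.1, q.1.2.2.1, q.1.2.2.2 ++ q.2)) (Primrec.pair (Primrec.const m)
      (Primrec.pair (Primrec.not.comp (Primrec.fst.comp (Primrec.snd.comp Primrec.fst)))
        (Primrec.pair (Primrec.fst.comp (Primrec.snd.comp (Primrec.snd.comp Primrec.fst)))
          (Primrec.list_append.comp
            (Primrec.snd.comp (Primrec.snd.comp (Primrec.snd.comp Primrec.fst)))
            Primrec.snd)))).computableIn).exists_jump.not
    refine (ih.jump.or ((hlevel (m + 1)).and hsucc)).of_iff ?_
    rintro ⟨k, b, p, σ⟩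
    rcases lt_trichotomy k (m + 1) with hk | rfl | hk
    · simp [hk.ne, hk.le, Nat.le_of_lt_succ hk]
    · simp [forces_succ_iff]
    · simp [hk.ne', hk.not_ge, show ¬ k ≤ m by omega]

theorem decidableIn_forcesSigma (hf : Computable f) (m : ℕ) :
    DecidableIn {toP (chi (EmptyIter m))} fun q : Bool × List ℕ × List Bool =>
      ForcesSigma f m q.1 q.2.1 q.2.2 :=
  ((decidableIn_forcesSigma_of_forces (decidableIn_forces hf m)).comp
    (Primrec.pair (Primrec.const m) Primrec.id).computableIn).of_iff fun q => by simp

/-- The requirement that the `Π_{k+1}` statements are decided, for all `k < m`. -/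
def decidingRequirement (f : List ℕ → ℕ) (m : ℕ) (q : (ℕ × Bool × List ℕ) × List Bool) : Prop :=
  q.1.1 < m → Forces f (q.1.1 + 1) q.1.2.1 q.1.2.2 q.2 ∨
    ForcesSigma f q.1.1 (!q.1.2.1) q.1.2.2 q.2

theorem isDenseAbove_decidingRequirement (m : ℕ) (S : List Bool → Prop) :
    IsDenseAbove S (decidingRequirement f m) where
  ext _ _ _ h hσ hk := (hσ hk).imp (isExtensionClosed_forces _ _ _ h)
    (isExtensionClosed_forcesSigma _ _ _ h)
  exists_append i ρ _ := by
    by_cases h : Forces f (i.1 + 1) i.2.1 i.2.2 ρ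
    · exact ⟨[], fun _ => .inl (by rwa [List.append_nil])⟩
    · rw [forces_succ_iff] at h
      push Not at h
      exact h.imp fun τ hτ _ => .inr hτ

theorem decidableIn_decidingRequirement (hf : Computable f) (m : ℕ) :
    DecidableIn {toP (chi (EmptyIter m))} (decidingRequirement f m) := by
  have hle : DecidableIn {toP (chi (EmptyIter m))}
      fun q : (ℕ × Bool × List ℕ) × List Bool => q.1.1 < m :=
    .of_primrecPred (Primrec.nat_lt.comp (Primrec.fst.comp Primrec.fst) (Primrec.const m))
  have hpi := (decidableIn_forces hf m).comp (h := fun q : (ℕ × Bool × List ℕ) × List Bool =>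
    (q.1.1 + 1, q.1.2.1, q.1.2.2, q.2)) (Primrec.pair
      (Primrec.succ.comp (Primrec.fst.comp Primrec.fst)) (Primrec.pair
        (Primrec.fst.comp (Primrec.snd.comp Primrec.fst)) (Primrec.pair
          (Primrec.snd.comp (Primrec.snd.comp Primrec.fst)) Primrec.snd))).computableIn
  have hsigma := (decidableIn_forcesSigma_of_forces (decidableIn_forces hf m)).comp
    (h := fun q : (ℕ × Bool × List ℕ) × List Bool => (q.1.1, !q.1.2.1, q.1.2.2, q.2))
    (Primrec.pair (Primrec.fst.comp Primrec.fst) (Primrec.pair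
      (Primrec.not.comp (Primrec.fst.comp (Primrec.snd.comp Primrec.fst))) (Primrec.pair
        (Primrec.snd.comp (Primrec.snd.comp Primrec.fst)) Primrec.snd))).computableIn
  refine (hle.not.or (hpi.or hsigma)).of_iff fun q => ?_
  rw [decidingRequirement, ← imp_iff_not_or]
  exact imp_congr_right fun h => by simp [Nat.succ_le_of_lt h, h.le]

theorem exists_partition_decidesAt {κ : Type*} [Primcodable κ] [Inhabited κ] {m : ℕ}
    {S : List Bool → Prop} {E : κ × List Bool → Prop} (hf : Computable f)
    (hS : IsBirthCondition S) (hE : IsDenseAbove S E)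
    (hSm : DecidableIn {toP (chi (EmptyIter m))} S)
    (hEm : DecidableIn {toP (chi (EmptyIter m))} E) :
    ∃ x ∈ OmegaPartInf, TuringReducibleFun x (chi (EmptyIter m)) ∧
      ∀ y ∈ Coarsenings x 2, ∃ z : ℕ → Bool, y = (fun n => (z n).toNat) ∧
        (∃ n, S (initSeg z n)) ∧ (∀ k < m, DecidesAt f k z) ∧ ∀ i, ∃ n, E (i, initSeg z n) := by
  have hD := (isDenseAbove_decidingRequirement (f := f) m S).and hS.ext hE
  have hDm := ((decidableIn_decidingRequirement hf m).comp
    (h := fun q : ((ℕ × Bool × List ℕ) × κ) × List Bool => (q.1.1, q.2))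
    ((Primrec.fst.comp Primrec.fst).pair Primrec.snd).computableIn).and
    (hEm.comp (h := fun q : ((ℕ × Bool × List ℕ) × κ) × List Bool => (q.1.2, q.2))
      ((Primrec.snd.comp Primrec.fst).pair Primrec.snd).computableIn)
  obtain ⟨x, hx, hxm, hxy⟩ := exists_generic_partition hS hD hSm hDm
  refine ⟨x, hx, hxm, fun y hy => ?_⟩
  obtain ⟨z, hyz, hSz, hDz⟩ := hxy y hy
  exact ⟨z, hyz, hSz, fun k hk b p => (hDz ((k, b, p), default)).imp fun n h => h.1 hk,
    fun i => (hDz (default, i)).imp fun n h => h.2⟩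

/-! ### Homogeneous partitions -/

theorem exists_partition_forall_nfEval {m : ℕ} (hf : Computable f)
    (h : ∀ N, ∃ τ, true ∈ τ ∧ ForcesSigma f m true [] (List.replicate N false ++ τ)) :
    ∃ x ∈ OmegaPartInf, TuringReducibleFun x (chi (EmptyIter m)) ∧
      ∀ y ∈ Coarsenings x 2, NFEval (m + 1) true f y := by
  have hS : IsBirthCondition fun ρ => true ∈ ρ ∧ ForcesSigma f m true [] ρ :=
    ⟨fun _ _ h => .imp (h.subset ·) (isExtensionClosed_forcesSigma _ _ _ h), fun _ => And.left,
      fun N => (h N).imp fun τ hτ => ⟨List.mem_append_right _ hτ.1, hτ.2⟩⟩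
  have hSm := (DecidableIn.of_primrecPred primrecPred_true_mem).and
    ((decidableIn_forcesSigma hf m).comp (h := fun ρ => (true, [], ρ))
      ((Primrec.const true).pair ((Primrec.const []).pair Primrec.id)).computableIn)
  obtain ⟨x, hx, hxm, hxy⟩ := exists_partition_decidesAt (κ := Unit) (E := fun _ => True) hf hS
    ⟨fun _ _ _ _ => id, fun _ _ _ => ⟨[], trivial⟩⟩ hSm
    ⟨fun _ => true, ComputableIn.const true, by simp⟩
  refine ⟨x, hx, hxm, fun y hy => ?_⟩
  obtain ⟨z, rfl, ⟨k, -, t, -, hk⟩, hz, -⟩ := hxy y hy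
  exact nfEval_true_iff_exists_piHolds.2 ⟨t, (piHolds_iff_exists_forces hz).2 ⟨k, hk⟩⟩

theorem isBirthCondition_startsWith_replicate (N : ℕ) :
    IsBirthCondition fun ρ => List.replicate N false <+: ρ ∧ true ∈ ρ where
  ext _ _ h := And.imp (·.trans h) (h.subset ·)
  true_mem _ := And.right
  exists_append M := by
    refine ⟨List.replicate N false ++ [true], ⟨List.replicate M false ++ [true], ?_⟩, by simp⟩
    simp only [← List.append_assoc, ← List.replicate_add, add_comm]

theorem isDenseAbove_forcesSigma_false {m N : ℕ}
    (h : ∀ τ, true ∈ τ → ¬ ForcesSigma f (m + 1) true [] (List.replicate N false ++ τ)) :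
    IsDenseAbove (fun ρ => List.replicate N false <+: ρ ∧ true ∈ ρ)
      fun q : ℕ × List Bool => ForcesSigma f m false [q.1] q.2 where
  ext e := isExtensionClosed_forcesSigma m false [e]
  exists_append := by
    rintro e _ ⟨⟨τ, rfl⟩, hτ⟩
    by_contra! hno
    refine h (τ ++ List.replicate (e + 1) false) (by simpa using hτ) ⟨e, ?_, ?_⟩
    · simp only [List.length_append, List.length_replicate]
      omega
    · exact forces_succ_iff.2 fun τ' => by simpa using hno (List.replicate (e + 1) false ++ τ')

theorem exists_partition_forall_not_nfEval {m N : ℕ} (hf : Computable f)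
    (h : ∀ τ, true ∈ τ → ¬ ForcesSigma f (m + 1) true [] (List.replicate N false ++ τ)) :
    ∃ x ∈ OmegaPartInf, TuringReducibleFun x (chi (EmptyIter m)) ∧
      ∀ y ∈ Coarsenings x 2, ¬ NFEval (m + 2) true f y := by
  have hSm := DecidableIn.of_primrecPred (O := {toP (chi (EmptyIter m))})
    ((primrecPred_startsWith_replicate N).and primrecPred_true_mem)
  have hEm := (decidableIn_forcesSigma hf m).comp
    (h := fun q : ℕ × List Bool => (false, [q.1], q.2)) ((Primrec.const false).pair
      ((Primrec.list_cons.comp Primrec.fst (Primrec.const [])).pair Primrec.snd)).computableIn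
  obtain ⟨x, hx, hxm, hxy⟩ := exists_partition_decidesAt hf
    (isBirthCondition_startsWith_replicate N) (isDenseAbove_forcesSigma_false h) hSm hEm
  refine ⟨x, hx, hxm, fun y hy => ?_⟩
  obtain ⟨z, rfl, -, hz, hE⟩ := hxy y hy
  rw [nfEval_true_iff_exists_piHolds]
  rintro ⟨e, he⟩
  obtain ⟨n, t, -, ht⟩ := hE e
  exact piHolds_succ_iff.1 he t ((piHolds_iff_exists_forces hz).2 ⟨n, ht⟩)

end Forcing

theorem stmt13_general (n : ℕ) (f : List ℕ → ℕ) (hf : Computable f) :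
    (∃ x ∈ OmegaPartInf, TuringReducibleFun x (chi (EmptyIter n)) ∧
        ∀ y ∈ Coarsenings x 2, ¬ NFEval (n + 2) true f y) ∨
    (∃ x ∈ OmegaPartInf, TuringReducibleFun x (chi (EmptyIter (n + 1))) ∧
        ∀ y ∈ Coarsenings x 2, NFEval (n + 2) true f y) := by
  by_cases h : ∀ N, ∃ τ, true ∈ τ ∧ ForcesSigma f (n + 1) true [] (List.replicate N false ++ τ)
  · exact .inr (exists_partition_forall_nfEval hf h)
  · push Not at h
    obtain ⟨N, hN⟩ := h
    exact .inl (exists_partition_forall_not_nfEval hf hN)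

/-- for a coloring `(ω)^2 = R ∪ ¬R` with `R` and its complement given by
computable Borel codes for `Σ^0_{n+2}` sets, there is a `∅^{(n)}`-computable partition
homogeneous for `¬R` or a `∅^{(n+1)}`-computable partition homogeneous for `R`. -/
theorem stmt13 (n : ℕ) (fR fC : List ℕ → ℕ)
    (hfR : Computable fR) (hfC : Computable fC)
    (hcompl : ∀ x ∈ OmegaPart 2, (NFEval (n + 2) true fR x ↔ ¬ NFEval (n + 2) true fC x)) :
    (∃ x ∈ OmegaPartInf, TuringReducibleFun x (chi (EmptyIter n)) ∧
        ∀ y ∈ Coarsenings x 2, ¬ NFEval (n + 2) true fR y) ∨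
    (∃ x ∈ OmegaPartInf, TuringReducibleFun x (chi (EmptyIter (n + 1))) ∧
        ∀ y ∈ Coarsenings x 2, NFEval (n + 2) true fR y) :=
  stmt13_general n fR hfR
end

section
/- Fix n ≥ 2. The problem Δ^0_n-rDRT^2_2 (given a reduced coloring (ω)^2 = R_0 ∪ R_1 with each R_i presented by a Borel code for a Σ^0_n set in normal form, find an infinite partition x and i < 2 with (x)^2 ⊆ R_i) is strongly Weihrauch equivalent to D^n_2 (given a stable coloring c : [ω]^n → 2, find an infinite limit-homogeneous set). -/
open Set

/-- Iterated limit: `lim_{s_1} ⋯ lim_{s_m} g(s_1,…,s_m) = v`. -/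
def IterLim : ℕ → (List ℕ → ℕ) → ℕ → Prop
  | 0, g, v => g [] = v
  | m + 1, g, v => ∃ N, ∀ s, N ≤ s → IterLim m (fun l => g (s :: l)) v

/-- An instance-solution problem on Baire space. -/
structure RProblem where
  inst : (ℕ → ℕ) → Prop
  sol : (ℕ → ℕ) → (ℕ → ℕ) → Prop

/-- Strong Weihrauch reducibility. -/
def StrongWeihrauchRed (P Q : RProblem) : Prop :=
  ∃ Φ Ψ : OracleCode, ∀ A, P.inst A →
    ∃ A' : ℕ → ℕ, Φ.evalo (toP A) = toP A' ∧ Q.inst A' ∧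
      ∀ B, Q.sol A' B → ∃ S : ℕ → ℕ, Ψ.evalo (toP B) = toP S ∧ P.sol A S

/-- The problem `D^n_2`: instances are stable 2-colorings of `[ω]^n` (presented as
functions on coded tuples), solutions are (characteristic functions of) infinite
limit-homogeneous sets. -/
def Dn2 (n : ℕ) : RProblem where
  inst A := (∀ m, A m ≤ 1) ∧
    ∀ k, ∃ v, IterLim (n - 1) (fun l => A (Encodable.encode (k :: l))) v
  sol A L := {k | L k = 1}.Infinite ∧
    ∃ i ≤ 1, ∀ k, L k = 1 → IterLim (n - 1) (fun l => A (Encodable.encode (k :: l))) i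

/-- The two `Σ^0_n` normal-form Borel codes packed into an instance. -/
def fCode (A : ℕ → ℕ) (i : ℕ) : List ℕ → ℕ := fun l => A (Nat.pair i (Encodable.encode l))

/-- The problem `Δ^0_n`-`rDRT^2_2`: instances are reduced colorings `(ω)^2 = R_0 ∪ R_1`
with each `R_i` presented by a Borel code for a `Σ^0_n` set in normal form; solutions
are homogeneous infinite partitions. -/
def rDRT (n : ℕ) : RProblem where
  inst A :=
    (∀ x ∈ OmegaPart 2, (NFEval n true (fCode A 0) x ↔ ¬ NFEval n true (fCode A 1) x)) ∧
    ∀ x ∈ OmegaPart 2, ∀ y ∈ OmegaPart 2, mu x 1 = mu y 1 →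
      (NFEval n true (fCode A 0) x ↔ NFEval n true (fCode A 0) y)
  sol A x := x ∈ OmegaPartInf ∧
    ∃ i ≤ 1, ∀ y ∈ Coarsenings x 2, NFEval n true (fCode A i) y

/-!
A reduced coloring of `(ω)^2` is a coloring of the possible values `k` of `μ^x(1)`, and infinite
sets of such values correspond to infinite partitions: a set `S` of positive numbers is turned into
the partition with nonzero blocks `{k}`, `k ∈ S`, and a partition into the set of its block minima.
Hence it suffices to translate between a `Δ^0_n` predicate of `k` and an `(n - 1)`-fold limit.

Bounding each of `n` alternating quantifiers by its own limit variable would need `n` limits. Since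
both the predicate and its negation are `∃∀…`, one limit suffices for the two leading quantifiers:
search in parallel for a witness of each, and at every stage follow the least candidate that is not
yet refuted. Conversely, a limit that exists can be written both as `∃∀` and as `∀∃`, so in an
`(n - 1)`-fold limit the adjacent quantifiers can be merged, which leaves `n` alternations.
-/

/-! ### Functionals computable uniformly in the oracle -/

namespace OracleCode

variable {g : ℕ →. ℕ} {c d : OracleCode}

theorem evalo_pair_eq_some {n a b : ℕ} (hc : c.evalo g n = Part.some a)
    (hd : d.evalo g n = Part.some b) : (pair c d).evalo g n = Part.some (Nat.pair a b) := by
  simp [evalo, hc, hd, Seq.seq]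

theorem evalo_comp_eq_some {n a b : ℕ} (hd : d.evalo g n = Part.some a)
    (hc : c.evalo g a = Part.some b) : (comp c d).evalo g n = Part.some b :=
  (congrArg (Part.bind · (c.evalo g)) hd).trans ((Part.bind_some _ _).trans hc)

theorem evalo_prec_eq_some {a : ℕ} {f : ℕ → ℕ} (hc : c.evalo g a = Part.some (f 0))
    (hd : ∀ y, d.evalo g (Nat.pair a (Nat.pair y (f y))) = Part.some (f (y + 1))) (n : ℕ) :
    (prec c d).evalo g (Nat.pair a n) = Part.some (f n) := by
  simp only [evalo, Nat.unpaired, Nat.unpair_pair]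
  induction n with
  | zero => exact hc
  | succ y ih =>
    simp only [ih]
    simp [hd]

theorem exists_evalo_eq_of_primrec {f : ℕ → ℕ} (hf : Nat.Primrec f) :
    ∃ c : OracleCode, ∀ A n, c.evalo (toP A) n = Part.some (f n) := by
  induction hf with
  | zero => exact ⟨.zero, fun _ _ => rfl⟩
  | succ => exact ⟨.succ, fun _ _ => rfl⟩
  | left => exact ⟨.left, fun _ _ => rfl⟩
  | right => exact ⟨.right, fun _ _ => rfl⟩
  | pair _ _ ihf ihg =>
    obtain ⟨c, hc⟩ := ihf
    obtain ⟨d, hd⟩ := ihg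
    exact ⟨.pair c d, fun A n => evalo_pair_eq_some (hc A n) (hd A n)⟩
  | comp _ _ ihf ihg =>
    obtain ⟨c, hc⟩ := ihf
    obtain ⟨d, hd⟩ := ihg
    exact ⟨.comp c d, fun A n => evalo_comp_eq_some (hd A n) (hc A _)⟩
  | @prec f g _ _ ihf ihg =>
    obtain ⟨c, hc⟩ := ihf
    obtain ⟨d, hd⟩ := ihg
    refine ⟨.prec c d, fun A n => ?_⟩
    rw [← Nat.pair_unpair n, Nat.unpaired, Nat.unpair_pair]
    exact evalo_prec_eq_some
      (f := Nat.rec (f n.unpair.1) fun y i => g (Nat.pair n.unpair.1 (Nat.pair y i)))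
      (hc A _) (fun y => hd A _) _

end OracleCode

/-- A functional `F` with an oracle argument and an argument in a coded type is *oracle-computable*
if one code computes `F A` for all oracles `A`. These are the functionals allowed in a strong
Weihrauch reduction. -/
def OracleComputable {α β : Type*} [Primcodable α] [Primcodable β] (F : (ℕ → ℕ) → α → β) : Prop :=
  ∃ c : OracleCode, ∀ A a,
    c.evalo (toP A) (Encodable.encode a) = Part.some (Encodable.encode (F A a))

/-- A relation between oracles and elements of a coded type is *oracle-decidable* if its Boolean
characteristic functional is oracle-computable. -/
def OracleDecidable {α : Type*} [Primcodable α] (p : (ℕ → ℕ) → α → Prop) : Prop :=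
  ∃ f : (ℕ → ℕ) → α → Bool, OracleComputable f ∧ ∀ A a, p A a ↔ f A a = true

section OracleComputable

variable {α β γ δ : Type*} [Primcodable α] [Primcodable β] [Primcodable γ] [Primcodable δ]
  {F : (ℕ → ℕ) → α → β} {G : (ℕ → ℕ) → α → γ} {N : (ℕ → ℕ) → α → ℕ} {p q : (ℕ → ℕ) → α → Prop}

namespace OracleComputable

theorem of_primrec {f : α → β} (hf : Primrec f) : OracleComputable fun _ => f := by
  obtain ⟨c, hc⟩ := OracleCode.exists_evalo_eq_of_primrec (Nat.Primrec.pred.comp hf)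
  exact ⟨c, fun A a => by simp [hc]⟩

theorem const (b : β) : OracleComputable fun _ (_ : α) => b :=
  of_primrec (.const b)

theorem comp {H : (ℕ → ℕ) → β → γ} (hH : OracleComputable H) (hF : OracleComputable F) :
    OracleComputable fun A a => H A (F A a) := by
  obtain ⟨c, hc⟩ := hH
  obtain ⟨d, hd⟩ := hF
  exact ⟨.comp c d, fun A a => OracleCode.evalo_comp_eq_some (hd A a) (hc A _)⟩

theorem oracle_apply (hN : OracleComputable N) : OracleComputable fun A a => A (N A a) :=
  comp (H := fun A n => A n) ⟨.oracle, fun _ _ => rfl⟩ hN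

theorem pair (hF : OracleComputable F) (hG : OracleComputable G) :
    OracleComputable fun A a => (F A a, G A a) := by
  obtain ⟨c, hc⟩ := hF
  obtain ⟨d, hd⟩ := hG
  exact ⟨.pair c d, fun A a => OracleCode.evalo_pair_eq_some (hc A a) (hd A a)⟩

theorem primrec_comp {f : β → γ} (hf : Primrec f) (hF : OracleComputable F) :
    OracleComputable fun A a => f (F A a) :=
  (of_primrec hf).comp hF

theorem primrec₂_comp {f : β → γ → δ} (hf : Primrec₂ f) (hF : OracleComputable F)
    (hG : OracleComputable G) : OracleComputable fun A a => f (F A a) (G A a) :=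
  primrec_comp hf (hF.pair hG)

theorem nat_rec {H : (ℕ → ℕ) → α → ℕ → β → β} (hF : OracleComputable F)
    (hH : OracleComputable fun A (x : α × ℕ × β) => H A x.1 x.2.1 x.2.2)
    (hN : OracleComputable N) :
    OracleComputable fun A a => Nat.rec (motive := fun _ => β) (F A a) (H A a) (N A a) := by
  have hrec : OracleComputable fun A (x : α × ℕ) =>
      Nat.rec (motive := fun _ => β) (F A x.1) (H A x.1) x.2 := by
    obtain ⟨c, hc⟩ := hF
    obtain ⟨d, hd⟩ := hH
    exact ⟨.prec c d, fun A x => OracleCode.evalo_prec_eq_some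
      (f := fun n => Encodable.encode (Nat.rec (motive := fun _ => β) (F A x.1) (H A x.1) n))
      (hc A x.1) (fun y => hd A (x.1, y, _)) x.2⟩
  exact hrec.comp ((of_primrec .id).pair hN)

theorem ite {F' : (ℕ → ℕ) → α → β} [∀ A a, Decidable (p A a)] (hp : OracleDecidable p)
    (hF : OracleComputable F) (hF' : OracleComputable F') :
    OracleComputable fun A a => if p A a then F A a else F' A a := by
  obtain ⟨f, hf, hpf⟩ := hp
  have hcond : Primrec fun x : Bool × β × β => bif x.1 then x.2.1 else x.2.2 :=
    Primrec.cond .fst (.comp .fst .snd) (.comp .snd .snd)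
  simpa only [hpf, Bool.cond_eq_ite] using primrec_comp hcond (hf.pair (hF.pair hF'))

end OracleComputable

namespace OracleDecidable

theorem of_primrecRel {R : β → γ → Prop} (hR : PrimrecRel R) (hF : OracleComputable F)
    (hG : OracleComputable G) : OracleDecidable fun A a => R (F A a) (G A a) := by
  obtain ⟨_, hR⟩ := hR
  exact ⟨_, .primrec_comp hR (hF.pair hG), fun A a => by simp⟩

theorem comp {r : (ℕ → ℕ) → β → Prop} (hr : OracleDecidable r) (hF : OracleComputable F) :
    OracleDecidable fun A a => r A (F A a) := by
  obtain ⟨f, hf, hrf⟩ := hr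
  exact ⟨_, hf.comp hF, fun A a => hrf A _⟩

theorem not (hp : OracleDecidable p) : OracleDecidable fun A a => ¬ p A a := by
  obtain ⟨f, hf, hpf⟩ := hp
  exact ⟨_, .primrec_comp Primrec.not hf, fun A a => by simp [hpf]⟩

theorem and (hp : OracleDecidable p) (hq : OracleDecidable q) :
    OracleDecidable fun A a => p A a ∧ q A a := by
  obtain ⟨f, hf, hpf⟩ := hp
  obtain ⟨g, hg, hqg⟩ := hq
  exact ⟨_, .primrec₂_comp Primrec.and hf hg, fun A a => by simp [hpf, hqg]⟩

theorem or (hp : OracleDecidable p) (hq : OracleDecidable q) :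
    OracleDecidable fun A a => p A a ∨ q A a := by
  simpa only [or_iff_not_and_not] using (hp.not.and hq.not).not

theorem iff (hp : OracleDecidable p) (hq : OracleDecidable q) :
    OracleDecidable fun A a => (p A a ↔ q A a) := by
  simpa only [iff_iff_and_or_not_and_not] using (hp.and hq).or (hp.not.and hq.not)

end OracleDecidable

theorem OracleComputable.chi {S : (ℕ → ℕ) → α → Set ℕ}
    (hS : OracleDecidable fun A a => N A a ∈ S A a) :
    OracleComputable fun A a => chi (S A a) (N A a) := by
  classical exact .ite hS (.const 1) (.const 0)

section BoundedQuantifiers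

variable {r : (ℕ → ℕ) → α → ℕ → Prop}

theorem OracleComputable.count [∀ A a, DecidablePred (r A a)]
    (hr : OracleDecidable fun A (x : α × ℕ) => r A x.1 x.2) (hN : OracleComputable N) :
    OracleComputable fun A a => Nat.count (r A a) (N A a) := by
  have hstep : OracleComputable fun A (x : α × ℕ × ℕ) => x.2.2 + if r A x.1 x.2.1 then 1 else 0 :=
    .primrec₂_comp Primrec.nat_add (.of_primrec (.comp .snd .snd))
      (.ite (hr.comp (.of_primrec (.pair .fst (.comp .fst .snd)))) (.const 1) (.const 0))
  convert (OracleComputable.const 0).nat_rec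
    (H := fun A a n k => k + if r A a n then 1 else 0) hstep hN using 3 with A a
  induction N A a with
  | zero => rfl
  | succ n ih => rw [Nat.count_succ, ih]

theorem OracleDecidable.forall_lt (hr : OracleDecidable fun A (x : α × ℕ) => r A x.1 x.2)
    (hN : OracleComputable N) : OracleDecidable fun A a => ∀ n < N A a, r A a n := by
  classical
  simpa only [Nat.count_iff_forall] using of_primrecRel Primrec.eq (.count hr hN) hN

theorem OracleDecidable.exists_lt (hr : OracleDecidable fun A (x : α × ℕ) => r A x.1 x.2)
    (hN : OracleComputable N) : OracleDecidable fun A a => ∃ n < N A a, r A a n := by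
  simpa only [not_forall, not_not, exists_prop] using
    (forall_lt (r := fun A a n => ¬ r A a n) hr.not hN).not

end BoundedQuantifiers

end OracleComputable

theorem StrongWeihrauchRed.of_oracleComputable {P Q : RProblem} {F G : (ℕ → ℕ) → ℕ → ℕ}
    (hF : OracleComputable F) (hG : OracleComputable G) (hinst : ∀ A, P.inst A → Q.inst (F A))
    (hsol : ∀ A, P.inst A → ∀ B, Q.sol (F A) B → P.sol A (G B)) : StrongWeihrauchRed P Q := by
  obtain ⟨c, hc⟩ := hF
  obtain ⟨d, hd⟩ := hG
  exact ⟨c, d, fun A hA => ⟨F A, funext (hc A), hinst A hA,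
    fun B hB => ⟨G B, funext (hd B), hsol A hA B hB⟩⟩⟩

/-! ### Alternating quantifiers and iterated limits -/

section AltQuant

open Filter

/-- A block of `m` alternating quantifiers over the entries of a tuple, applied to a predicate on
tuples; the leading quantifier is `∃` for `true` and `∀` for `false`, as in `NFEval`. -/
def AltQuant : ℕ → Bool → (List ℕ → Prop) → Prop
  | 0, _, p => p []
  | m + 1, true, p => ∃ t, AltQuant m false fun l => p (t :: l)
  | m + 1, false, p => ∀ t, AltQuant m true fun l => p (t :: l)

theorem nfEval_iff_altQuant (m : ℕ) (b : Bool) (f : List ℕ → ℕ) (x : ℕ → ℕ) :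
    NFEval m b f x ↔ AltQuant m b fun l => x ∈ leafSet (f l) := by
  induction m generalizing b f with
  | zero => rfl
  | succ m ih => cases b <;> simp only [NFEval, AltQuant, ih]

theorem not_altQuant_false (m : ℕ) (b : Bool) : ¬ AltQuant m b fun _ => False := by
  induction m generalizing b with
  | zero => exact id
  | succ m ih => cases b <;> simp [AltQuant, ih]

/-- The filter of tuples `(s₁, …, sₘ)` along which iterated limits are taken: each entry tends to
infinity faster than the preceding ones. -/
def iterAtTop : ℕ → Filter (List ℕ)
  | 0 => pure []
  | m + 1 => atTop.bind fun s => (iterAtTop m).map (s :: ·)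

theorem eventually_iterAtTop_succ {m : ℕ} {p : List ℕ → Prop} :
    (∀ᶠ l in iterAtTop (m + 1), p l) ↔ ∀ᶠ s in atTop, ∀ᶠ l in iterAtTop m, p (s :: l) :=
  Iff.rfl

instance iterAtTop_neBot (m : ℕ) : (iterAtTop m).NeBot := by
  induction m with
  | zero => exact pure_neBot
  | succ m ih =>
    refine forall_mem_nonempty_iff_neBot.1 fun U hU => ?_
    obtain ⟨s, hs⟩ := (eventually_iterAtTop_succ.1 hU).exists
    obtain ⟨l, hl⟩ := hs.exists
    exact ⟨s :: l, hl⟩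

theorem iterLim_iff_eventually {m : ℕ} {g : List ℕ → ℕ} {v : ℕ} :
    IterLim m g v ↔ ∀ᶠ l in iterAtTop m, g l = v := by
  induction m generalizing g with
  | zero => rfl
  | succ m ih => simp only [IterLim, ih, eventually_iterAtTop_succ, eventually_atTop]

theorem IterLim.eventually_eq_iff {m : ℕ} {g : List ℕ → ℕ} {v : ℕ} (h : IterLim m g v) (i : ℕ) :
    ∀ᶠ l in iterAtTop m, (g l = i ↔ IterLim m g i) := by
  rw [iterLim_iff_eventually] at h
  have hi : IterLim m g i ↔ v = i := by
    rw [iterLim_iff_eventually, eventually_congr (h.mono fun l hl => by rw [hl]),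
      eventually_const]
  filter_upwards [h] with l hl
  rw [hl, hi]

theorem iterLim_zero_iff_not_iterLim_one {m : ℕ} {g : List ℕ → ℕ} (hg : ∀ l, g l ≤ 1)
    (h : ∃ v, IterLim m g v) : IterLim m g 0 ↔ ¬ IterLim m g 1 := by
  obtain ⟨v, hv⟩ := h
  obtain ⟨l, h₀, h₁⟩ := ((hv.eventually_eq_iff 0).and (hv.eventually_eq_iff 1)).exists
  have hle := hg l
  rw [← h₀, ← h₁]
  lia

end AltQuant

section LimitApproximation

open Filter

theorem eventually_exists_lt_iff (p : ℕ → Prop) :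
    ∀ᶠ s in atTop, ((∃ t < s, p t) ↔ ∃ t, p t) := by
  by_cases h : ∃ t, p t
  · obtain ⟨t, ht⟩ := h
    filter_upwards [eventually_gt_atTop t] with s hs
    exact iff_of_true ⟨t, hs, ht⟩ ⟨t, ht⟩
  · exact .of_forall fun s => iff_of_false (fun ⟨t, _, ht⟩ => h ⟨t, ht⟩) h

theorem eventually_forall_lt_iff (p : ℕ → Prop) :
    ∀ᶠ s in atTop, ((∀ t < s, p t) ↔ ∀ t, p t) := by
  filter_upwards [eventually_exists_lt_iff fun t => ¬ p t] with s hs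
  exact not_iff_not.1 (by simpa only [not_forall, exists_prop] using hs)

/-- The block of quantifiers `AltQuant m b` with the `k`-th quantifier bounded by the `k`-th entry
of a tuple. -/
def BddQuant : ℕ → Bool → (List ℕ → Prop) → List ℕ → Prop
  | 0, _, p, _ => p []
  | m + 1, true, p, s => ∃ t < s.headI, BddQuant m false (fun l => p (t :: l)) s.tail
  | m + 1, false, p, s => ∀ t < s.headI, BddQuant m true (fun l => p (t :: l)) s.tail

theorem eventually_bddQuant_iff (m : ℕ) (b : Bool) (p : List ℕ → Prop) :
    ∀ᶠ s in iterAtTop m, (BddQuant m b p s ↔ AltQuant m b p) := by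
  induction m generalizing b p with
  | zero => exact Iff.rfl
  | succ m ih =>
    have hlt (c : Bool) (s : ℕ) : ∀ᶠ l in iterAtTop m, ∀ t < s,
        (BddQuant m c (fun l => p (t :: l)) l ↔ AltQuant m c fun l => p (t :: l)) :=
      (eventually_all_finite (finite_lt_nat s)).2 fun t _ => ih c _
    rw [eventually_iterAtTop_succ]
    cases b with
    | false =>
      filter_upwards [eventually_forall_lt_iff fun t => AltQuant m true fun l => p (t :: l)]
        with s hs
      filter_upwards [hlt true s] with l hl
      exact (forall₂_congr hl).trans hs
    | true =>
      filter_upwards [eventually_exists_lt_iff fun t => AltQuant m false fun l => p (t :: l)]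
        with s hs
      filter_upwards [hlt false s] with l hl
      exact (exists_congr fun t => and_congr_right (hl t)).trans hs

/-- At stage `s`, the least candidate witness of `∃ t, ∀ u, p₀ t u` that has not been refuted comes
no later than the one of `∃ t, ∀ u, p₁ t u`. -/
def FirstWitness (p₀ p₁ : ℕ → ℕ → Prop) (s : ℕ) : Prop :=
  ∃ t < s, (∀ u < s, p₀ t u) ∧ ∀ t' < t, ∃ u < s, ¬ p₁ t' u

theorem firstWitness_congr {p₀ p₁ q₀ q₁ : ℕ → ℕ → Prop} {s : ℕ}
    (h₀ : ∀ t < s, ∀ u < s, (p₀ t u ↔ q₀ t u)) (h₁ : ∀ t < s, ∀ u < s, (p₁ t u ↔ q₁ t u)) :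
    FirstWitness p₀ p₁ s ↔ FirstWitness q₀ q₁ s :=
  exists_congr fun t => and_congr_right fun ht => and_congr (forall₂_congr (h₀ t ht)) <|
    forall₂_congr fun t' ht' => exists_congr fun u => and_congr_right fun hu =>
      not_congr (h₁ t' (ht'.trans ht) u hu)

theorem eventually_forall_lt_exists_lt {q : ℕ → ℕ → Prop} (h : ∀ t, ∃ u, q t u) (n : ℕ) :
    ∀ᶠ s in atTop, ∀ t < n, ∃ u < s, q t u :=
  (eventually_all_finite (finite_lt_nat n)).2 fun t _ =>
    (eventually_exists_lt_iff (q t)).mono fun _ hs => hs.2 (h t)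

theorem eventually_firstWitness_iff {p₀ p₁ : ℕ → ℕ → Prop}
    (h : (∃ t, ∀ u, p₀ t u) ↔ ¬ ∃ t, ∀ u, p₁ t u) :
    ∀ᶠ s in atTop, (FirstWitness p₀ p₁ s ↔ ∃ t, ∀ u, p₀ t u) := by
  by_cases h₀ : ∃ t, ∀ u, p₀ t u
  · have refuted : ∀ t, ∃ u, ¬ p₁ t u := by simpa only [not_exists, not_forall] using h.1 h₀
    obtain ⟨t₀, ht₀⟩ := id h₀
    filter_upwards [eventually_gt_atTop t₀, eventually_forall_lt_exists_lt refuted t₀]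
      with s hs href
    exact iff_of_true ⟨t₀, hs, fun u _ => ht₀ u, href⟩ h₀
  · have refuted : ∀ t, ∃ u, ¬ p₀ t u := by simpa only [not_exists, not_forall] using h₀
    obtain ⟨t₁, ht₁⟩ : ∃ t, ∀ u, p₁ t u := not_not.1 (mt h.2 h₀)
    filter_upwards [eventually_forall_lt_exists_lt refuted (t₁ + 1)] with s href
    refine iff_of_false ?_ h₀
    rintro ⟨t, -, hp₀, hp₁⟩
    rcases lt_or_ge t₁ t with hlt | hle
    · obtain ⟨u, -, hu⟩ := hp₁ t₁ hlt
      exact hu (ht₁ u)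
    · obtain ⟨u, hu, hn⟩ := href t (Nat.lt_succ_of_le hle)
      exact hn (hp₀ u hu)

/-- The stage-`s` guess at the truth of `AltQuant (m + 2) true p₀`, when its negation is
`AltQuant (m + 2) true p₁`. Both leading quantifier pairs are searched up to the first entry of `s`,
which saves one limit over bounding all `m + 2` quantifiers separately. -/
def LimApprox (m : ℕ) (p₀ p₁ : List ℕ → Prop) (s : List ℕ) : Prop :=
  FirstWitness (fun t u => BddQuant m true (fun l => p₀ (t :: u :: l)) s.tail)
    (fun t u => BddQuant m true (fun l => p₁ (t :: u :: l)) s.tail) s.headI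

theorem eventually_limApprox_iff {m : ℕ} {p₀ p₁ : List ℕ → Prop}
    (h : AltQuant (m + 2) true p₀ ↔ ¬ AltQuant (m + 2) true p₁) :
    ∀ᶠ s in iterAtTop (m + 1), (LimApprox m p₀ p₁ s ↔ AltQuant (m + 2) true p₀) := by
  have hlt (p : List ℕ → Prop) (s : ℕ) : ∀ᶠ l in iterAtTop m, ∀ t < s, ∀ u < s,
      (BddQuant m true (fun l => p (t :: u :: l)) l ↔
        AltQuant m true fun l => p (t :: u :: l)) :=
    (eventually_all_finite (finite_lt_nat s)).2 fun t _ =>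
      (eventually_all_finite (finite_lt_nat s)).2 fun u _ => eventually_bddQuant_iff m true _
  rw [eventually_iterAtTop_succ]
  filter_upwards [eventually_firstWitness_iff h] with s hs
  filter_upwards [hlt p₀ s, hlt p₁ s] with l hl₀ hl₁
  exact (firstWitness_congr hl₀ hl₁).trans hs

namespace OracleDecidable

variable {α : Type*} [Primcodable α]

theorem bddQuant {p : (ℕ → ℕ) → α → List ℕ → Prop} {S : (ℕ → ℕ) → α → List ℕ}
    (hp : OracleDecidable fun A (x : α × List ℕ) => p A x.1 x.2) (hS : OracleComputable S)
    (m : ℕ) (b : Bool) : OracleDecidable fun A a => BddQuant m b (p A a) (S A a) := by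
  induction m generalizing α b with
  | zero => exact hp.comp (.of_primrec (Primrec.id.pair (.const [])))
  | succ m ih =>
    have hcons : OracleDecidable fun A (x : (α × ℕ) × List ℕ) => p A x.1.1 (x.1.2 :: x.2) :=
      hp.comp (.of_primrec
        (.pair (.comp .fst .fst) (Primrec.list_cons.comp (.comp .snd .fst) .snd)))
    have htail : OracleComputable fun A (x : α × ℕ) => (S A x.1).tail :=
      .primrec_comp Primrec.list_tail (hS.comp (.of_primrec .fst))
    have hhead : OracleComputable fun A a => (S A a).headI :=
      .primrec_comp Primrec.list_headI hS
    cases b with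
    | false =>
      exact forall_lt (r := fun A a t => BddQuant m true (fun l => p A a (t :: l)) (S A a).tail)
        (ih (p := fun A x l => p A x.1 (x.2 :: l)) hcons htail true) hhead
    | true =>
      exact exists_lt (r := fun A a t => BddQuant m false (fun l => p A a (t :: l)) (S A a).tail)
        (ih (p := fun A x l => p A x.1 (x.2 :: l)) hcons htail false) hhead

theorem firstWitness {p₀ p₁ : (ℕ → ℕ) → α → ℕ → ℕ → Prop} {N : (ℕ → ℕ) → α → ℕ}
    (h₀ : OracleDecidable fun A (x : (α × ℕ) × ℕ) => p₀ A x.1.1 x.1.2 x.2)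
    (h₁ : OracleDecidable fun A (x : (α × ℕ) × ℕ) => p₁ A x.1.1 x.1.2 x.2)
    (hN : OracleComputable N) :
    OracleDecidable fun A a => FirstWitness (p₀ A a) (p₁ A a) (N A a) := by
  have hN' : OracleComputable fun A (x : α × ℕ) => N A x.1 := hN.comp (.of_primrec .fst)
  have hall : OracleDecidable fun A (x : α × ℕ) => ∀ u < N A x.1, p₀ A x.1 x.2 u :=
    forall_lt (r := fun A x u => p₀ A x.1 x.2 u) h₀ hN'
  have href : OracleDecidable fun A (x : α × ℕ) => ∃ u < N A x.1, ¬ p₁ A x.1 x.2 u :=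
    exists_lt (r := fun A x u => ¬ p₁ A x.1 x.2 u) h₁.not hN'
  have hrefs : OracleDecidable fun A (x : α × ℕ) => ∀ t < x.2, ∃ u < N A x.1, ¬ p₁ A x.1 t u :=
    forall_lt (r := fun A x t => ∃ u < N A x.1, ¬ p₁ A x.1 t u)
      (href.comp (.of_primrec (.pair (.comp .fst .fst) .snd))) (.of_primrec .snd)
  exact exists_lt (r := fun A a t => (∀ u < N A a, p₀ A a t u) ∧
    ∀ t' < t, ∃ u < N A a, ¬ p₁ A a t' u) (hall.and hrefs) hN

theorem limApprox {p₀ p₁ : (ℕ → ℕ) → α → List ℕ → Prop} {S : (ℕ → ℕ) → α → List ℕ}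
    (h₀ : OracleDecidable fun A (x : α × List ℕ) => p₀ A x.1 x.2)
    (h₁ : OracleDecidable fun A (x : α × List ℕ) => p₁ A x.1 x.2) (hS : OracleComputable S)
    (m : ℕ) : OracleDecidable fun A a => LimApprox m (p₀ A a) (p₁ A a) (S A a) := by
  have hcons : Primrec fun x : ((α × ℕ) × ℕ) × List ℕ => (x.1.1.1, x.1.1.2 :: x.1.2 :: x.2) :=
    .pair (.comp .fst (.comp .fst .fst)) (Primrec.list_cons.comp (.comp .snd (.comp .fst .fst))
      (Primrec.list_cons.comp (.comp .snd .fst) .snd))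
  have htail : OracleComputable fun A (x : (α × ℕ) × ℕ) => (S A x.1.1).tail :=
    .primrec_comp Primrec.list_tail (hS.comp (.of_primrec (.comp .fst .fst)))
  exact firstWitness
    (p₀ := fun A a t u => BddQuant m true (fun l => p₀ A a (t :: u :: l)) (S A a).tail)
    (p₁ := fun A a t u => BddQuant m true (fun l => p₁ A a (t :: u :: l)) (S A a).tail)
    (bddQuant (p := fun A x l => p₀ A x.1.1 (x.1.2 :: x.2 :: l))
      (h₀.comp (.of_primrec hcons)) htail m true)
    (bddQuant (p := fun A x l => p₁ A x.1.1 (x.1.2 :: x.2 :: l))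
      (h₁.comp (.of_primrec hcons)) htail m true)
    (.primrec_comp Primrec.list_headI hS)

end OracleDecidable

end LimitApproximation

/-! ### Ordered partitions and clopen codes -/

theorem chi_eq_one {S : Set ℕ} {n : ℕ} : chi S n = 1 ↔ n ∈ S := by
  simp [chi]

theorem chi_eq_zero {S : Set ℕ} {n : ℕ} : chi S n = 0 ↔ n ∉ S := by
  simp [chi]

theorem chi_le_one (S : Set ℕ) (n : ℕ) : chi S n ≤ 1 := by
  unfold chi
  split <;> simp

theorem IsOrderedFn.apply_zero {f : ℕ → ℕ} (hf : IsOrderedFn f) : f 0 = 0 := by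
  by_contra h
  obtain ⟨m, hm, -⟩ := hf 0 _ rfl 0 (Nat.pos_of_ne_zero h)
  exact Nat.not_lt_zero m hm

theorem apply_mu {x : ℕ → ℕ} {i : ℕ} (h : ∃ n, x n = i) : x (mu x i) = i :=
  Nat.sInf_mem h

theorem mu_eq_of_forall_lt {x : ℕ → ℕ} {i k : ℕ} (hk : x k = i) (h : ∀ m < k, x m ≠ i) :
    mu x i = k :=
  le_antisymm (Nat.sInf_le hk) (not_lt.1 fun hlt => h _ hlt (apply_mu ⟨k, hk⟩))

section OmegaPartTwo

variable {x : ℕ → ℕ}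

theorem apply_mu_one (hx : x ∈ OmegaPart 2) : x (mu x 1) = 1 :=
  apply_mu (hx.2.2 1 one_lt_two)

theorem apply_eq_zero_of_lt_mu_one (hx : x ∈ OmegaPart 2) {n : ℕ} (hn : n < mu x 1) : x n = 0 := by
  have hne : x n ≠ 1 := Nat.notMem_of_lt_sInf (s := {n | x n = 1}) hn
  have hlt := hx.2.1 n
  lia

theorem mu_one_eq_iff (hx : x ∈ OmegaPart 2) {k : ℕ} : mu x 1 = k ↔ x k = 1 ∧ ∀ i < k, x i = 0 := by
  constructor
  · rintro rfl
    exact ⟨apply_mu_one hx, fun i => apply_eq_zero_of_lt_mu_one hx⟩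
  · rintro ⟨hk, h⟩
    exact mu_eq_of_forall_lt hk fun i hi => by simp [h i hi]

theorem chi_mem_omegaPart {S : Set ℕ} (h₀ : 0 ∉ S) (hS : S.Nonempty) : chi S ∈ OmegaPart 2 := by
  refine ⟨fun n i hi j hj => ⟨0, Nat.pos_of_ne_zero ?_, ?_⟩,
    fun n => Nat.lt_succ_of_le (chi_le_one S n), fun i hi => ?_⟩
  · rintro rfl
    have := chi_eq_zero.2 h₀
    lia
  · have := chi_le_one S n
    rw [chi_eq_zero.2 h₀]
    lia
  · interval_cases i
    · exact ⟨0, chi_eq_zero.2 h₀⟩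
    · exact hS.imp fun _ => chi_eq_one.2

theorem mu_chi_one {S : Set ℕ} {k : ℕ} (hk : k ∈ S) (h : ∀ n < k, n ∉ S) : mu (chi S) 1 = k :=
  mu_eq_of_forall_lt (chi_eq_one.2 hk) fun n hn => mt chi_eq_one.1 (h n hn)

end OmegaPartTwo

theorem mem_leafSet_iff {x : ℕ → ℕ} {e : ℕ} : x ∈ leafSet e ↔
    e ≠ 0 ∧ (e = 1 ∨ (e % 2 = 0 ↔ x ∈ Cyl (Denumerable.ofNat (List ℕ) (e / 2 - 1)))) := by
  unfold leafSet
  split_ifs with h₀ h₁ h₂ <;> simp [*]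

theorem OracleDecidable.mem_leafSet {α : Type*} [Primcodable α] {X : (ℕ → ℕ) → α → ℕ → ℕ}
    {E : (ℕ → ℕ) → α → ℕ} (hX : OracleComputable fun A (x : α × ℕ) => X A x.1 x.2)
    (hE : OracleComputable E) : OracleDecidable fun A a => X A a ∈ leafSet (E A a) := by
  have heq {F : (ℕ → ℕ) → α → ℕ} (hF : OracleComputable F) (b : ℕ) :
      OracleDecidable fun A a => F A a = b := .of_primrecRel Primrec.eq hF (.const b)
  have hmod : OracleComputable fun A a => E A a % 2 := .primrec₂_comp .nat_mod hE (.const 2)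
  have hstr : OracleComputable fun A a => Denumerable.ofNat (List ℕ) (E A a / 2 - 1) :=
    .primrec_comp (Primrec.ofNat _)
      (.primrec₂_comp .nat_sub (.primrec₂_comp .nat_div hE (.const 2)) (.const 1))
  have hcyl : OracleDecidable fun A a =>
      X A a ∈ Cyl (Denumerable.ofNat (List ℕ) (E A a / 2 - 1)) := by
    refine forall_lt (r := fun A a n =>
      X A a n = (Denumerable.ofNat (List ℕ) (E A a / 2 - 1)).getD n 0) ?_
      (.primrec_comp Primrec.list_length hstr)
    exact .of_primrecRel Primrec.eq hX (.primrec₂_comp (f := fun l i => l.getD i 0)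
      (Primrec.list_getD 0) (hstr.comp (.of_primrec .fst)) (.of_primrec .snd))
  simpa only [mem_leafSet_iff] using
    (heq hE 0).not.and ((heq hE 1).or ((heq hmod 0).iff hcyl))

theorem mem_cyl_restrictList {x y : ℕ → ℕ} {n : ℕ} :
    x ∈ Cyl (restrictList y n) ↔ ∀ i < n, x i = y i := by
  simp +contextual [Cyl, restrictList, List.getD_eq_getElem?_getD]

/-- A leaf label for the clopen set of those `x` in `(ω)^2` with `μ^x(1) = k`. -/
def muLabel (k : ℕ) : ℕ :=
  2 * (Encodable.encode (restrictList (fun i => if i = k then 1 else 0) (k + 1)) + 1)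

theorem primrec_muLabel : Primrec muLabel := by
  have hrestrict : Primrec fun k => restrictList (fun i => if i = k then 1 else 0) (k + 1) :=
    Primrec.list_map (Primrec.list_range.comp .succ)
      (Primrec.ite (Primrec.eq.comp .snd .fst) (.const 1) (.const 0))
  exact Primrec.nat_mul.comp (.const 2) (Primrec.succ.comp (Primrec.encode.comp hrestrict))

theorem mem_leafSet_muLabel {x : ℕ → ℕ} (hx : x ∈ OmegaPart 2) {k : ℕ} :
    x ∈ leafSet (muLabel k) ↔ mu x 1 = k := by
  have hlabel : leafSet (muLabel k) =
      Cyl (restrictList (fun i => if i = k then 1 else 0) (k + 1)) := by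
    unfold leafSet muLabel
    rw [if_neg (by lia), if_neg (by lia), if_pos (by lia), Nat.mul_div_cancel_left _ two_pos,
      Nat.add_sub_cancel, Denumerable.ofNat_encode]
  rw [hlabel, mem_cyl_restrictList, mu_one_eq_iff hx]
  constructor
  · intro h
    exact ⟨by simpa using h k k.lt_succ_self, fun i hi => by simpa [hi.ne] using h i (by lia)⟩
  · rintro ⟨hk, h⟩ i hi
    rcases Nat.lt_succ_iff_lt_or_eq.1 hi with hlt | rfl
    · simp [h i hlt, hlt.ne]
    · simp [hk]

/-! ### Reducing `rDRT` to `Dn2` -/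

/-- A partition `x` in `(ω)^2` with `μ^x(1) = k`. As `μ^x(1)` is never `0`, the value at `k = 0` is
an arbitrary one, which keeps the function total. -/
noncomputable def singletonPart (k : ℕ) : ℕ → ℕ := chi {max k 1}

theorem singletonPart_mem (k : ℕ) : singletonPart k ∈ OmegaPart 2 :=
  chi_mem_omegaPart (by simp; lia) (singleton_nonempty _)

theorem mu_singletonPart {k : ℕ} (hk : k ≠ 0) : mu (singletonPart k) 1 = k :=
  mu_chi_one (by simp; lia) fun n hn => by simp; lia

theorem oracleComputable_singletonPart :
    OracleComputable fun _ (x : ℕ × ℕ) => singletonPart x.1 x.2 := by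
  have hmem : OracleDecidable fun _ (x : ℕ × ℕ) => x.2 = max x.1 1 :=
    .of_primrecRel Primrec.eq (.of_primrec .snd)
      (.of_primrec (Primrec.nat_max.comp .fst (.const 1)))
  exact .chi (S := fun _ (x : ℕ × ℕ) => {max x.1 1}) hmem

theorem nfEval_fCode_congr {n : ℕ} {A x y : ℕ → ℕ} (hA : (rDRT n).inst A) (hx : x ∈ OmegaPart 2)
    (hy : y ∈ OmegaPart 2) (hxy : mu x 1 = mu y 1) {i : ℕ} (hi : i ≤ 1) :
    NFEval n true (fCode A i) x ↔ NFEval n true (fCode A i) y := by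
  have h₀ := hA.2 x hx y hy hxy
  interval_cases i
  · exact h₀
  · exact not_iff_not.1 ((hA.1 x hx).symm.trans (h₀.trans (hA.1 y hy)))

/-- The `Dn2`-instance associated with an `rDRT`-instance: the tuple `k :: s`, presented by its
code `n`, receives the stage-`s` guess at the color of the partitions `x` with `μ^x(1) = k`. -/
noncomputable def stageColoring (m : ℕ) (A : ℕ → ℕ) : ℕ → ℕ :=
  chi {n | ¬ LimApprox m
    (fun t => singletonPart (Denumerable.ofNat (List ℕ) n).headI ∈ leafSet (fCode A 0 t))
    (fun t => singletonPart (Denumerable.ofNat (List ℕ) n).headI ∈ leafSet (fCode A 1 t))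
    (Denumerable.ofNat (List ℕ) n).tail}

theorem oracleComputable_stageColoring (m : ℕ) : OracleComputable (stageColoring m) := by
  have hofNat : OracleComputable fun _ n => Denumerable.ofNat (List ℕ) n :=
    .of_primrec (Primrec.ofNat _)
  have hleaf (i : ℕ) : OracleDecidable fun A (x : ℕ × List ℕ) =>
      singletonPart (Denumerable.ofNat (List ℕ) x.1).headI ∈ leafSet (fCode A i x.2) := by
    refine .mem_leafSet
      (X := fun _ (x : ℕ × List ℕ) => singletonPart (Denumerable.ofNat (List ℕ) x.1).headI) ?_ ?_
    · exact oracleComputable_singletonPart.comp (.of_primrec (.pair (Primrec.list_headI.comp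
        ((Primrec.ofNat _).comp (.comp .fst .fst))) .snd))
    · exact .oracle_apply
        (.of_primrec (Primrec₂.natPair.comp (.const i) (Primrec.encode.comp .snd)))
  exact .chi (.not (.limApprox
    (p₀ := fun A n t => singletonPart (Denumerable.ofNat (List ℕ) n).headI ∈ leafSet (fCode A 0 t))
    (p₁ := fun A n t => singletonPart (Denumerable.ofNat (List ℕ) n).headI ∈ leafSet (fCode A 1 t))
    (hleaf 0) (hleaf 1) (.primrec_comp Primrec.list_tail hofNat) m))

theorem iterLim_stageColoring_iff {m : ℕ} {A : ℕ → ℕ} (hA : (rDRT (m + 2)).inst A) (k : ℕ) {i : ℕ}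
    (hi : i ≤ 1) : IterLim (m + 1) (fun l => stageColoring m A (Encodable.encode (k :: l))) i ↔
      NFEval (m + 2) true (fCode A i) (singletonPart k) := by
  have hcompl := hA.1 _ (singletonPart_mem k)
  have hlim : ∀ᶠ l in iterAtTop (m + 1), (stageColoring m A (Encodable.encode (k :: l)) = 0 ↔
      NFEval (m + 2) true (fCode A 0) (singletonPart k)) := by
    simp only [nfEval_iff_altQuant] at hcompl ⊢
    filter_upwards [eventually_limApprox_iff hcompl] with l hl
    simpa [stageColoring, chi_eq_zero] using hl
  have hlim_i : ∀ᶠ l in iterAtTop (m + 1), (stageColoring m A (Encodable.encode (k :: l)) = i ↔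
      NFEval (m + 2) true (fCode A i) (singletonPart k)) := by
    filter_upwards [hlim] with l hl
    interval_cases i
    · exact hl
    · rw [← not_iff_not, ← hcompl, ← hl, stageColoring, chi_eq_one, chi_eq_zero]
  rw [iterLim_iff_eventually, Filter.eventually_congr hlim_i, Filter.eventually_const]

open Classical in
/-- The partition whose nonzero blocks are the singletons `{n}` with `n ∈ S`. -/
noncomputable def singletonBlocks (S : Set ℕ) (n : ℕ) : ℕ :=
  if n ∈ S then Nat.count (· ∈ S) n + 1 else 0

theorem OracleComputable.singletonBlocks {S : (ℕ → ℕ) → Set ℕ}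
    (hS : OracleDecidable fun A n => n ∈ S A) :
    OracleComputable fun A => singletonBlocks (S A) := by
  classical
  have hcount : OracleComputable fun A n => Nat.count (· ∈ S A) n :=
    count (r := fun A _ n => n ∈ S A) (hS.comp (.of_primrec .snd)) (.of_primrec .id)
  exact .ite hS (.primrec_comp .succ hcount) (.const 0)

theorem singletonBlocks_of_notMem {S : Set ℕ} {n : ℕ} (hn : n ∉ S) : singletonBlocks S n = 0 :=
  if_neg hn

theorem singletonBlocks_mem {S : Set ℕ} (h₀ : 0 ∉ S) (hS : S.Infinite) :
    singletonBlocks S ∈ OmegaPartInf := by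
  classical
  have hnth (j : ℕ) : singletonBlocks S (Nat.nth (· ∈ S) j) = j + 1 := by
    have hmem : Nat.nth (· ∈ S) j ∈ S := Nat.nth_mem_of_infinite hS j
    rw [singletonBlocks, if_pos hmem]
    simpa using Nat.count_nth_of_infinite (p := (· ∈ S)) hS j
  have hzero : singletonBlocks S 0 = 0 := singletonBlocks_of_notMem h₀
  constructor
  · rintro n _ rfl j hj
    have hn : n ∈ S := by_contra fun hn => by simp [singletonBlocks_of_notMem hn] at hj
    cases j with
    | zero => exact ⟨0, Nat.pos_of_ne_zero (ne_of_mem_of_not_mem hn h₀), hzero⟩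
    | succ j =>
      refine ⟨_, Nat.nth_lt_of_lt_count ?_, hnth j⟩
      rw [singletonBlocks, if_pos hn] at hj
      convert Nat.lt_of_succ_lt_succ hj
  · rintro (_ | j)
    exacts [⟨0, hzero⟩, ⟨_, hnth j⟩]

theorem mu_one_mem_of_mem_coarsenings {S : Set ℕ} {y : ℕ → ℕ} (h₀ : 0 ∉ S)
    (hy : y ∈ Coarsenings (singletonBlocks S) 2) : mu y 1 ∈ S := by
  by_contra h
  have hblock : y (mu y 1) = y 0 :=
    hy.2 _ _ ((singletonBlocks_of_notMem h).trans (singletonBlocks_of_notMem h₀).symm)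
  rw [apply_mu_one hy.1, hy.1.1.apply_zero] at hblock
  exact one_ne_zero hblock

theorem rDRT_red_Dn2 (m : ℕ) : StrongWeihrauchRed (rDRT (m + 2)) (Dn2 (m + 2)) := by
  have hG : OracleComputable fun L => singletonBlocks {n | 0 < n ∧ L n = 1} :=
    .singletonBlocks (.and (.of_primrecRel Primrec.nat_lt (.const 0) (.of_primrec .id))
      (.of_primrecRel Primrec.eq (.oracle_apply (.of_primrec .id)) (.const 1)))
  refine .of_oracleComputable (oracleComputable_stageColoring m) hG (fun A hA => ?_)
    fun A hA L ⟨hinf, i, hi, hlim⟩ => ?_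
  · refine ⟨chi_le_one _, fun k => ?_⟩
    by_cases hcol : NFEval (m + 2) true (fCode A 0) (singletonPart k)
    · exact ⟨0, (iterLim_stageColoring_iff hA k zero_le_one).2 hcol⟩
    · exact ⟨1, (iterLim_stageColoring_iff hA k le_rfl).2
        (not_not.1 (mt (hA.1 _ (singletonPart_mem k)).2 hcol))⟩
  · have h₀ : 0 ∉ {n | 0 < n ∧ L n = 1} := fun h => h.1.ne rfl
    have hS : {n | 0 < n ∧ L n = 1}.Infinite :=
      (hinf.sdiff (finite_singleton 0)).mono fun n hn => ⟨Nat.pos_of_ne_zero hn.2, hn.1⟩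
    refine ⟨singletonBlocks_mem h₀ hS, i, hi, fun y hy => ?_⟩
    have hmem := mu_one_mem_of_mem_coarsenings h₀ hy
    have hcol := (iterLim_stageColoring_iff hA _ hi).1 (hlim _ hmem.2)
    exact (nfEval_fCode_congr hA (singletonPart_mem _) hy.1
      (mu_singletonPart hmem.1.ne') hi).1 hcol

/-! ### Reducing `Dn2` to `rDRT` -/

/-- Decode a tuple of quantified variables into a tuple of limit variables. Each variable codes a
pair: an offset above the current threshold, and the next threshold. A limit is `∃ N, ∀ d, …` and
also `∀ N, ∃ d, …`, evaluated at `N + d`; choosing the form of each limit so that its first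
quantifier merges with the last one of the preceding limit makes `m` limits cost `m` alternations
only, after an initial quantifier over the first threshold. -/
def offsets : ℕ → List ℕ → List ℕ
  | _, [] => []
  | M, t :: l => (M + t.unpair.1) :: offsets t.unpair.2 l

theorem primrec_offsets : Primrec (offsets 0) := by
  let step (p : ℕ × List ℕ) (t : ℕ) : ℕ × List ℕ := (t.unpair.2, p.2 ++ [p.1 + t.unpair.1])
  have hfold (l : List ℕ) (p : ℕ × List ℕ) : (l.foldl step p).2 = p.2 ++ offsets p.1 l := by
    induction l generalizing p with
    | nil => simp [offsets]
    | cons t l ih => simp [ih, step, offsets]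
  have hstep : Primrec₂ fun (_ : List ℕ) (q : (ℕ × List ℕ) × ℕ) => step q.1 q.2 := by
    have hp : Primrec fun q : List ℕ × (ℕ × List ℕ) × ℕ => q.2.1 := .comp .fst .snd
    have ht : Primrec fun q : List ℕ × (ℕ × List ℕ) × ℕ => q.2.2.unpair :=
      Primrec.unpair.comp (.comp .snd .snd)
    exact Primrec.pair (.comp .snd ht) (Primrec.list_concat.comp (.comp .snd hp)
      (Primrec.nat_add.comp (.comp .fst hp) (.comp .fst ht)))
  refine (Primrec.snd.comp (Primrec.list_foldl .id (.const (0, [])) hstep)).of_eq fun l => ?_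
  simpa using hfold l (0, [])

theorem exists_forall_add_iff {r : ℕ → Prop} {q : Prop} (h : ∀ᶠ s in Filter.atTop, (r s ↔ q)) :
    (∃ M, ∀ d, r (M + d)) ↔ q := by
  have hr : (∃ M, ∀ d, r (M + d)) ↔ ∀ᶠ s in Filter.atTop, r s := by
    rw [Filter.eventually_atTop]
    refine exists_congr fun M => ⟨fun h s hs => ?_, fun h d => h _ (Nat.le_add_right M d)⟩
    obtain ⟨d, rfl⟩ := Nat.exists_eq_add_of_le hs
    exact h d
  rw [hr, Filter.eventually_congr h, Filter.eventually_const]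

theorem altQuant_offsets {m : ℕ} {p : List ℕ → Prop} {q : Prop}
    (h : ∀ᶠ l in iterAtTop m, (p l ↔ q)) :
    ((∃ M, AltQuant m false fun t => p (offsets M t)) ↔ q) ∧
      ((∀ M, AltQuant m true fun t => p (offsets M t)) ↔ q) := by
  induction m generalizing p with
  | zero =>
    have h : p [] ↔ q := h
    simp [AltQuant, offsets, h]
  | succ m ih =>
    rw [eventually_iterAtTop_succ] at h
    have hforall : ∀ᶠ s in Filter.atTop,
        ((∀ M, AltQuant m true fun t => p (s :: offsets M t)) ↔ q) := h.mono fun s hs => (ih hs).2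
    have hexists : ∀ᶠ s in Filter.atTop,
        (¬ (∃ M, AltQuant m false fun t => p (s :: offsets M t)) ↔ ¬ q) :=
      h.mono fun s hs => not_congr (ih hs).1
    constructor
    · rw [← exists_forall_add_iff hforall]
      exact exists_congr fun M =>
        ⟨fun h d M' => by simpa [offsets] using h (Nat.pair d M'), fun h t => h _ _⟩
    · rw [← not_iff_not, ← exists_forall_add_iff hexists, not_forall]
      refine exists_congr fun M => ⟨fun h d ⟨M', hM'⟩ => h ⟨Nat.pair d M', ?_⟩,
        fun h ⟨t, ht⟩ => h _ ⟨_, ht⟩⟩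
      simpa [offsets] using hM'

/-- The leaf label at the tuple `t` of the Borel code for the set of `x` in `(ω)^2` such that the
iterated limit of `A` at `μ^x(1)` is `i`. The first entry of `t` codes the value of `μ^x(1)`
together with the first threshold. -/
def limLabel (A : ℕ → ℕ) (i : ℕ) (t : List ℕ) : ℕ :=
  if A (Encodable.encode (offsets 0 t)) = i then muLabel (offsets 0 t).headI else 0

/-- The `rDRT`-instance associated with a `Dn2`-instance: its two Borel codes, packed as for
`fCode`. -/
def toCodes (A : ℕ → ℕ) (n : ℕ) : ℕ :=
  limLabel A n.unpair.1 (Denumerable.ofNat (List ℕ) n.unpair.2)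

theorem fCode_toCodes (A : ℕ → ℕ) (i : ℕ) : fCode (toCodes A) i = limLabel A i := by
  funext l
  simp [fCode, toCodes]

theorem oracleComputable_toCodes : OracleComputable toCodes := by
  have hoff : OracleComputable fun _ (n : ℕ) => offsets 0 (Denumerable.ofNat (List ℕ) n.unpair.2) :=
    .of_primrec (primrec_offsets.comp ((Primrec.ofNat _).comp (.comp .snd .unpair)))
  have hcond : OracleDecidable fun A (n : ℕ) => A (Encodable.encode (offsets 0
      (Denumerable.ofNat (List ℕ) n.unpair.2))) = n.unpair.1 :=
    .of_primrecRel Primrec.eq (.oracle_apply (.primrec_comp .encode hoff))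
      (.of_primrec (.comp .fst .unpair))
  exact .ite hcond (.primrec_comp primrec_muLabel (.primrec_comp Primrec.list_headI hoff))
    (.const 0)

theorem mem_leafSet_limLabel {A x : ℕ → ℕ} (hx : x ∈ OmegaPart 2) (i k M : ℕ) (l : List ℕ) :
    x ∈ leafSet (limLabel A i (Nat.pair k M :: l)) ↔
      mu x 1 = k ∧ A (Encodable.encode (k :: offsets M l)) = i := by
  by_cases h : A (Encodable.encode (k :: offsets M l)) = i
  · simp only [limLabel, offsets, Nat.unpair_pair, Nat.zero_add, h, if_true, List.headI_cons,
      mem_leafSet_muLabel hx, and_true]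
  · simp only [limLabel, offsets, Nat.unpair_pair, Nat.zero_add, h, if_false, leafSet, if_true,
      mem_empty_iff_false, and_false]

theorem nfEval_toCodes {m : ℕ} {A x : ℕ → ℕ} (hx : x ∈ OmegaPart 2)
    (hlim : ∃ v, IterLim m (fun l => A (Encodable.encode (mu x 1 :: l))) v) (i : ℕ) :
    NFEval (m + 1) true (fCode (toCodes A) i) x ↔
      IterLim m (fun l => A (Encodable.encode (mu x 1 :: l))) i := by
  obtain ⟨v, hv⟩ := hlim
  rw [fCode_toCodes, nfEval_iff_altQuant, ← (altQuant_offsets (hv.eventually_eq_iff i)).1]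
  constructor
  · rintro ⟨t, ht⟩
    obtain ⟨⟨k, M⟩, rfl⟩ := Nat.pairEquiv.surjective t
    simp only [Nat.pairEquiv_apply, Function.uncurry, mem_leafSet_limLabel hx] at ht
    by_cases hk : mu x 1 = k
    · exact ⟨M, by simpa [hk] using ht⟩
    · simp only [hk, false_and] at ht
      exact absurd ht (not_altQuant_false _ _)
  · rintro ⟨M, hM⟩
    exact ⟨Nat.pair (mu x 1) M, by simpa only [mem_leafSet_limLabel hx, true_and] using hM⟩

/-- The set of the minima of the blocks of `x` other than the block of `0`. -/
def blockMins (x : ℕ → ℕ) : Set ℕ := {k | 0 < k ∧ ∀ j < k, x j ≠ x k}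

theorem oracleComputable_chi_blockMins : OracleComputable fun x => chi (blockMins x) := by
  have hne : OracleDecidable fun x (n : ℕ × ℕ) => x n.2 ≠ x n.1 :=
    .not (.of_primrecRel Primrec.eq (.oracle_apply (.of_primrec .snd))
      (.oracle_apply (.of_primrec .fst)))
  have hpos : OracleDecidable fun _ (k : ℕ) => 0 < k :=
    .of_primrecRel Primrec.nat_lt (.const 0) (.of_primrec .id)
  exact .chi (hpos.and (.forall_lt (r := fun x k j => x j ≠ x k) hne (.of_primrec .id)))

theorem mu_mem_blockMins {x : ℕ → ℕ} (hx : x ∈ OmegaPartInf) {i : ℕ} (hi : i ≠ 0) :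
    mu x i ∈ blockMins x := by
  have happly : x (mu x i) = i := apply_mu (hx.2 i)
  refine ⟨Nat.pos_of_ne_zero fun h => hi ?_, fun j hj h => ?_⟩
  · rw [← happly, h, hx.1.apply_zero]
  · exact Nat.notMem_of_lt_sInf (s := {n | x n = i}) hj (h.trans happly)

theorem infinite_blockMins {x : ℕ → ℕ} (hx : x ∈ OmegaPartInf) : (blockMins x).Infinite := by
  refine infinite_of_injective_forall_mem (f := fun i => mu x (i + 1)) (fun i j hij => ?_)
    fun i => mu_mem_blockMins hx i.succ_ne_zero
  have h : i + 1 = j + 1 := by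
    rw [← apply_mu (hx.2 (i + 1)), ← apply_mu (hx.2 (j + 1))]
    exact congrArg x hij
  exact Nat.succ_injective h

theorem exists_coarsening_mu_eq {x : ℕ → ℕ} {k : ℕ} (hk : k ∈ blockMins x) :
    ∃ y ∈ Coarsenings x 2, mu y 1 = k := by
  obtain ⟨hpos, hne⟩ := hk
  refine ⟨chi {n | x n = x k}, ⟨chi_mem_omegaPart (hne 0 hpos) ⟨k, rfl⟩, fun n m h => ?_⟩,
    mu_chi_one rfl hne⟩
  simp [chi, h]

theorem Dn2_red_rDRT (m : ℕ) : StrongWeihrauchRed (Dn2 (m + 1)) (rDRT (m + 1)) := by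
  have hcolor {A : ℕ → ℕ} (hA : (Dn2 (m + 1)).inst A) {x : ℕ → ℕ} (hx : x ∈ OmegaPart 2) (i : ℕ) :
      NFEval (m + 1) true (fCode (toCodes A) i) x ↔
        IterLim m (fun l => A (Encodable.encode (mu x 1 :: l))) i :=
    nfEval_toCodes hx (hA.2 _) i
  refine .of_oracleComputable oracleComputable_toCodes oracleComputable_chi_blockMins
    (fun A hA => ⟨fun x hx => ?_, fun x hx y hy hxy => ?_⟩)
    fun A hA x ⟨hx, i, hi, hcol⟩ => ⟨?_, i, hi, fun k hk => ?_⟩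
  · rw [hcolor hA hx, hcolor hA hx]
    exact iterLim_zero_iff_not_iterLim_one (fun _ => hA.1 _) (hA.2 _)
  · rw [hcolor hA hx, hcolor hA hy, hxy]
  · exact (infinite_blockMins hx).mono fun _ => chi_eq_one.2
  · obtain ⟨y, hy, rfl⟩ := exists_coarsening_mu_eq (chi_eq_one.1 hk)
    exact (hcolor hA hy.1 i).1 (hcol y hy)

/-- `Δ^0_n`-`rDRT^2_2` is strongly Weihrauch equivalent to `D^n_2`. -/
theorem stmt14 (n : ℕ) (hn : 2 ≤ n) :
    StrongWeihrauchRed (rDRT n) (Dn2 n) ∧ StrongWeihrauchRed (Dn2 n) (rDRT n) := by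
  obtain ⟨m, rfl⟩ := Nat.exists_eq_add_of_le' hn
  exact ⟨rDRT_red_Dn2 m, Dn2_red_rDRT (m + 1)⟩
end
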